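/- arXiv:quant-ph/0410052 — 3 statements merged into one kernel-verified Lean document; each statement's English description precedes it below -/
import Mathlib

section
/- Suppose an $n \times n$ Hermitian matrix $\sigma$ can be written as a convex combination of unitary conjugates of a fixed $n \times n$ Hermitian matrix $\rho$ with $N$ terms: $\sigma = \sum_{i=1}^N p_i U_i \rho U_i^\dagger$, where each $U_i$ is unitary, $p_i \geq 0$, and $\sum_{i=1}^N p_i = 1$. Then there exist $n \times n$ unitary matrices $V_1, \ldots, V_N$ such that $\sigma = \frac{1}{N} \sum_{i=1}^N V_i \rho V_i^\dagger$. -/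
open Matrix

/-!
Let `Z` be the set of weights `w ≥ 0` for which the Hermitian matrices `w i • ρ i` have unitary
conjugates with vanishing sum. The key point is that `Z` is convex. For `w` in the convex hull of
`Z`, choose conjugates whose sum `D` has minimal Hilbert–Schmidt norm. By the first variation, `D`
commutes with each summand, so the positive eigenspace of `D` splits each of them. Suppose `D ≠ 0`;
as `tr D = 0`, that eigenspace is nonzero. The second variation says that the Schubert cells through
it, one for each summand, meet transversally there. Transversality survives small perturbations,
hence, constructible subsets of the affine line being finite or cofinite, almost all translates of
these cells meet, and by compactness all translates of the Schubert varieties meet. A common point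
of the translates gives a trace inequality, linear in the weights, which holds on `Z` but fails
at `w`: a contradiction, so `D = 0`.

Applied to `-σ` with weight `1` and copies of `ρ`, this shows that the weights `p` with
`σ = ∑ i, p i • U i * ρ * (U i)ᴴ` form a convex set. It is invariant under permutations, and the
average of the cyclic shifts of `p` is constant.
-/

section PolynomialSystems

open Polynomial

theorem finite_or_finite_compl_of_isConstructible {K : Type*} [Field K]
    {S : Set (PrimeSpectrum K[X])} (hS : Topology.IsConstructible S) :
    {c : K | PrimeSpectrum.comap (evalRingHom c) ⊥ ∈ S}.Finite ∨
      {c : K | PrimeSpectrum.comap (evalRingHom c) ⊥ ∈ S}ᶜ.Finite := by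
  induction hS using Topology.IsConstructible.empty_union_induction with
  | open_retrocompact U hU _ =>
    obtain ⟨s, hs⟩ := (PrimeSpectrum.isOpen_iff U).1 hU
    by_cases h : s ⊆ {0}
    · left
      convert Set.finite_empty using 1
      have hempty : U = ∅ := Set.compl_univ_iff.1 <| hs.trans <| Set.eq_univ_of_forall fun P f hf ↦
        (h hf : f = 0) ▸ P.asIdeal.zero_mem
      simp [hempty]
    · right
      obtain ⟨f, hf, hf0⟩ := Set.not_subset.1 h
      refine (Polynomial.finite_setOfPred_isRoot hf0).subset fun c hc ↦ ?_
      have : PrimeSpectrum.comap (evalRingHom c) ⊥ ∈ PrimeSpectrum.zeroLocus s := hs ▸ hc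
      exact this hf
  | union s _ t _ hs ht =>
    rcases hs with hs | hs
    · rcases ht with ht | ht
      · exact Or.inl (hs.union ht)
      · exact Or.inr (ht.subset fun c hc h ↦ hc (Or.inr h))
    · exact Or.inr (hs.subset fun c hc h ↦ hc (Or.inl h))
  | compl s _ hs => exact hs.symm.imp id fun h ↦ by simpa [Set.compl_ofPred] using h

variable {K : Type*} [Field K] [IsAlgClosed K]

theorem nonempty_algHom_of_finiteType (B : Type*) [CommRing B] [Nontrivial B] [Algebra K B]
    [Algebra.FiniteType K B] : Nonempty (B →ₐ[K] K) := by
  obtain ⟨M, hM⟩ := Ideal.exists_maximal B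
  let := Ideal.Quotient.field M
  have := finite_of_finite_type_of_isJacobsonRing K (B ⧸ M)
  have hbij := IsAlgClosed.algebraMap_bijective_of_isIntegral (k := K) (K := B ⧸ M)
  exact ⟨((AlgEquiv.ofBijective (Algebra.ofId K (B ⧸ M)) hbij).symm : B ⧸ M →ₐ[K] K).comp
    (Ideal.Quotient.mkₐ K M)⟩

theorem exists_ringHom_comp_eq_evalRingHom_iff {B : Type*} [CommRing B] {f : K[X] →+* B}
    (hf : f.FiniteType) (c : K) :
    (∃ φ : B →+* K, φ.comp f = evalRingHom c) ↔
      PrimeSpectrum.comap (evalRingHom c) ⊥ ∈ Set.range (PrimeSpectrum.comap f) := by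
  constructor
  · rintro ⟨φ, hφ⟩
    exact ⟨PrimeSpectrum.comap φ ⊥, by rw [← hφ]; rfl⟩
  · rintro ⟨P, hP⟩
    algebraize [f, f.comp (C : K →+* K[X])]
    have : Algebra.FiniteType K B := .trans (S := K[X]) inferInstance inferInstance
    obtain ⟨ψ⟩ := nonempty_algHom_of_finiteType (K := K) (B ⧸ P.asIdeal)
    have hX : f (X - C c) ∈ P.asIdeal := by
      have : X - C c ∈ (PrimeSpectrum.comap (evalRingHom c) ⊥).asIdeal := by simp
      rwa [← hP] at this
    have hC (a : K) : ψ (Ideal.Quotient.mk P.asIdeal (f (C a))) = a := ψ.commutes a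
    refine ⟨(ψ : _ →+* K).comp (Ideal.Quotient.mk P.asIdeal), ?_⟩
    ext a
    · simpa using hC a
    · have := congrArg ψ (Ideal.Quotient.eq_zero_iff_mem.2 hX)
      simpa [hC, sub_eq_zero] using this

theorem exists_eval₂_eq_zero_iff_exists_quotient_ringHom {R S σ κ : Type*} [CommRing R]
    [CommRing S] (f : R →+* S) (F : κ → MvPolynomial σ R) :
    (∃ x : σ → S, ∀ k, (F k).eval₂ f x = 0) ↔
      ∃ φ : MvPolynomial σ R ⧸ Ideal.span (Set.range F) →+* S,
        φ.comp ((Ideal.Quotient.mk _).comp MvPolynomial.C) = f := by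
  constructor
  · rintro ⟨x, hx⟩
    have hker : Ideal.span (Set.range F) ≤ RingHom.ker (MvPolynomial.eval₂Hom f x) := by
      simpa [Ideal.span_le, Set.range_subset_iff] using hx
    exact ⟨Ideal.Quotient.lift _ (MvPolynomial.eval₂Hom f x) hker,
      RingHom.ext fun a ↦ MvPolynomial.eval₂_C _ _ a⟩
  · rintro ⟨φ, rfl⟩
    refine ⟨fun i ↦ φ (Ideal.Quotient.mk _ (MvPolynomial.X i)), fun k ↦ ?_⟩
    have hcomp : MvPolynomial.eval₂Hom (φ.comp ((Ideal.Quotient.mk _).comp MvPolynomial.C))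
        (fun i ↦ φ (Ideal.Quotient.mk _ (MvPolynomial.X i))) =
        φ.comp (Ideal.Quotient.mk (Ideal.span (Set.range F))) :=
      MvPolynomial.ringHom_ext' (by ext1 a; simp) (by simp)
    have hF : Ideal.Quotient.mk (Ideal.span (Set.range F)) (F k) = 0 :=
      Ideal.Quotient.eq_zero_iff_mem.2 (Ideal.subset_span ⟨k, rfl⟩)
    simpa [hF] using congrArg (· (F k)) hcomp

theorem finite_compl_of_infinite_setOf_exists_eval₂_eq_zero {σ κ : Type*} [Finite σ]
    (F : κ → MvPolynomial σ K[X])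
    (h : {c : K | ∃ x : σ → K, ∀ k, (F k).eval₂ (evalRingHom c) x = 0}.Infinite) :
    {c : K | ∃ x : σ → K, ∀ k, (F k).eval₂ (evalRingHom c) x = 0}ᶜ.Finite := by
  have hC : RingHom.FiniteType (MvPolynomial.C : K[X] →+* MvPolynomial σ K[X]) :=
    RingHom.finiteType_algebraMap.2 inferInstance
  have hπ : RingHom.FiniteType (A := K[X]) (B := MvPolynomial σ K[X] ⧸ Ideal.span (Set.range F))
      ((Ideal.Quotient.mk (Ideal.span (Set.range F))).comp MvPolynomial.C) :=
    hC.comp_surjective Ideal.Quotient.mk_surjective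
  simp only [exists_eval₂_eq_zero_iff_exists_quotient_ringHom,
    exists_ringHom_comp_eq_evalRingHom_iff hπ] at h ⊢
  exact (finite_or_finite_compl_of_isConstructible (PrimeSpectrum.isConstructible_range_comap
    (.of_finiteType.1 hπ))).resolve_left h

end PolynomialSystems

section GraphsMeet

variable {ι p q : Type*} [Fintype p] [Fintype q]

/-- The graph of `s : K^p → K^q` is mapped by `g` into that of `φ` if and only if this vanishes. -/
def graphDefect {R : Type*} [Ring R] (g : Matrix (p ⊕ q) (p ⊕ q) R) (φ s : Matrix q p R) :
    Matrix q p R :=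
  g.toBlocks₂₁ + g.toBlocks₂₂ * s - φ * (g.toBlocks₁₁ + g.toBlocks₁₂ * s)

theorem map_graphDefect {R T : Type*} [Ring R] [Ring T] (f : R →+* T)
    (g : Matrix (p ⊕ q) (p ⊕ q) R) (φ s : Matrix q p R) :
    (graphDefect g φ s).map f = graphDefect (g.map f) (φ.map f) (s.map f) := by
  ext
  simp [graphDefect, mul_apply, toBlocks₁₁, toBlocks₁₂, toBlocks₂₁, toBlocks₂₂]

/-- Some graph contains, for every `i`, the image under `g i` of the graph of a matrix supported on
`S i`. The graphs of such matrices form the open cell of a Schubert variety if `S i` is suitably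
monotone, so this says that the translates of these cells meet, within the big cell. -/
def GraphsMeet {R : Type*} [Ring R] (S : ι → q → p → Prop)
    (g : ι → Matrix (p ⊕ q) (p ⊕ q) R) : Prop :=
  ∃ (φ : Matrix q p R) (s : ι → Matrix q p R),
    (∀ i y x, ¬ S i y x → s i y x = 0) ∧ ∀ i, graphDefect (g i) φ (s i) = 0

open Polynomial in
theorem finite_compl_setOf_graphsMeet_add_smul [Finite ι] {K : Type*} [Field K] [IsAlgClosed K]
    {S : ι → q → p → Prop} (A B : ι → Matrix (p ⊕ q) (p ⊕ q) K)
    (h : {z : K | GraphsMeet S fun i ↦ A i + z • B i}.Infinite) :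
    {z : K | GraphsMeet S fun i ↦ A i + z • B i}ᶜ.Finite := by
  let φ : Matrix q p (MvPolynomial ((q × p) ⊕ (ι × q × p)) K[X]) :=
    .of fun y x ↦ .X (.inl (y, x))
  let s (i : ι) : Matrix q p (MvPolynomial ((q × p) ⊕ (ι × q × p)) K[X]) :=
    .of fun y x ↦ .X (.inr (i, y, x))
  let g (i : ι) : Matrix (p ⊕ q) (p ⊕ q) (MvPolynomial ((q × p) ⊕ (ι × q × p)) K[X]) :=
    .of fun r t ↦ .C (C (A i r t) + X * C (B i r t))
  let F : (ι × q × p) ⊕ {k : ι × q × p // ¬ S k.1 k.2.1 k.2.2} →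
      MvPolynomial ((q × p) ⊕ (ι × q × p)) K[X] :=
    Sum.elim (fun k ↦ graphDefect (g k.1) φ (s k.1) k.2.1 k.2.2) fun k ↦ s k.1.1 k.1.2.1 k.1.2.2
  have hdefect (z : K) (v : (q × p) ⊕ (ι × q × p) → K) (i : ι) :
      (graphDefect (g i) φ (s i)).map (MvPolynomial.eval₂Hom (evalRingHom z) v) =
        graphDefect (A i + z • B i) (.of fun y x ↦ v (.inl (y, x)))
          (.of fun y x ↦ v (.inr (i, y, x))) := by
    rw [map_graphDefect]
    congr 1 <;> ext <;> simp [g, φ, s, mul_comm z]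
  have hF (z : K) : GraphsMeet S (fun i ↦ A i + z • B i) ↔
      ∃ v, ∀ k, (F k).eval₂ (evalRingHom z) v = 0 := by
    constructor
    · rintro ⟨φ', s', hs, h⟩
      refine ⟨Sum.elim (fun k ↦ φ' k.1 k.2) (fun k ↦ s' k.1 k.2.1 k.2.2), ?_⟩
      rintro (⟨i, y, x⟩ | ⟨⟨i, y, x⟩, hk⟩)
      · exact (congrFun₂ (hdefect z _ i) y x).trans (congrFun₂ (h i) y x)
      · simpa [F, s] using hs i y x hk
    · rintro ⟨v, hv⟩
      refine ⟨.of fun y x ↦ v (.inl (y, x)), fun i ↦ .of fun y x ↦ v (.inr (i, y, x)),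
        fun i y x h ↦ by simpa [F, s] using hv (.inr ⟨(i, y, x), h⟩), fun i ↦ ?_⟩
      rw [← hdefect]
      exact Matrix.ext fun y x ↦ hv (.inl (i, y, x))
  simp only [hF] at h ⊢
  exact finite_compl_of_infinite_setOf_exists_eval₂_eq_zero F h

end GraphsMeet

section Frames

theorem exists_blockTriangular_conjTranspose_mul_self_eq_one {𝕜 m p : Type*} [RCLike 𝕜]
    [Fintype m] [Fintype p] [LinearOrder p] {E : Matrix m p 𝕜}
    (hE : Function.Injective E.mulVec) :
    ∃ N : Matrix p p 𝕜, N.BlockTriangular id ∧ (E * N)ᴴ * (E * N) = 1 := by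
  let : LocallyFiniteOrderBot p :=
    .ofIic p (fun a ↦ Finset.univ.filter (· ≤ a)) (by simp)
  let v (j : p) : EuclideanSpace 𝕜 m := WithLp.toLp 2 (E.col j)
  have hv : LinearIndependent 𝕜 v := (mulVec_injective_iff.1 hE).map'
    (WithLp.linearEquiv 2 𝕜 (m → 𝕜)).symm.toLinearMap (LinearEquiv.ker _)
  let o := InnerProductSpace.gramSchmidtNormed 𝕜 v
  have ho : Orthonormal 𝕜 o := InnerProductSpace.gramSchmidtNormed_orthonormal hv
  have hcoord (j : p) : ∃ c : p → 𝕜, (∀ i, j < i → c i = 0) ∧ ∑ i, c i • v i = o j := by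
    have hspan : o j ∈ Submodule.span 𝕜 (v '' Set.Iic j) := by
      rw [← InnerProductSpace.span_gramSchmidt_Iic, ← InnerProductSpace.span_gramSchmidtNormed]
      exact Submodule.subset_span ⟨j, Set.mem_Iic.2 le_rfl, rfl⟩
    obtain ⟨c, hc, hco⟩ := (Finsupp.mem_span_image_iff_linearCombination 𝕜).1 hspan
    refine ⟨c, fun i hi ↦ (Finsupp.mem_supported' 𝕜 c).1 hc i (not_le.2 hi), ?_⟩
    rw [← hco, Finsupp.linearCombination_apply, Finsupp.sum_fintype _ _ (by simp)]
  choose c hc hco using hcoord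
  have hEN (r : m) (j : p) : (E * (of c)ᵀ) r j = o j r := by
    simp [← hco, mul_apply, v, mul_comm]
  refine ⟨(of c)ᵀ, fun i j ↦ hc j i, ?_⟩
  ext i j
  rw [one_apply, ← orthonormal_iff_ite.1 ho i j, mul_apply]
  simp only [conjTranspose_apply, hEN, PiLp.inner_apply, RCLike.inner_apply, mul_comm,
    starRingEnd_apply]

/-- An orthonormal frame `E` in the Schubert cell closure given by the levels `τ`, for the flag of
superlevel sets of `α`: the column `E j` is a combination of the coordinate vectors `r` with
`τ j ≤ α r`. -/
structure IsSchubertFrame {m p : Type*} [Fintype m] [DecidableEq p] (α : m → ℝ) (τ : p → ℝ)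
    (E : Matrix m p ℂ) : Prop where
  conjTranspose_mul_self : Eᴴ * E = 1
  apply_eq_zero : ∀ r j, α r < τ j → E r j = 0

variable {m p : Type*} [Fintype m] [Fintype p] [DecidableEq p] {α : m → ℝ} {τ : p → ℝ}

theorem exists_isSchubertFrame_mul {E : Matrix m p ℂ} (hE : Function.Injective E.mulVec)
    (hzero : ∀ r j, α r < τ j → E r j = 0) :
    ∃ N : Matrix p p ℂ, IsSchubertFrame α τ (E * N) := by
  let level (j : p) : ℝᵒᵈ ×ₗ Fin (Fintype.card p) := toLex (.toDual (τ j), Fintype.equivFin p j)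
  have hlevel : Function.Injective level := fun i j h ↦
    (Fintype.equivFin p).injective (congrArg (fun x ↦ (ofLex x).2) h)
  let : LinearOrder p := .lift' level hlevel
  have hτ : Antitone τ := fun i j h ↦ Prod.Lex.monotone_fst (level i) (level j) h
  obtain ⟨N, hN, hEN⟩ := exists_blockTriangular_conjTranspose_mul_self_eq_one hE
  refine ⟨N, hEN.trans (by congr!), fun r j hj ↦ Finset.sum_eq_zero fun i _ ↦ ?_⟩
  obtain hi | hi := le_or_gt i j
  · simp [hzero r i (hj.trans_le (hτ hi))]
  · simp [hN hi]

theorem IsSchubertFrame.sum_le_re_trace [DecidableEq m] {E : Matrix m p ℂ}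
    (hE : IsSchubertFrame α τ E) :
    ∑ j, τ j ≤ (trace (Eᴴ * diagonal (fun r ↦ (α r : ℂ)) * E)).re := by
  have hcol (j : p) : ∑ r, Complex.normSq (E r j) = 1 := by
    have := congrFun₂ hE.conjTranspose_mul_self j j
    simpa [mul_apply, Complex.normSq_apply] using congrArg Complex.re this
  have htrace : (trace (Eᴴ * diagonal (fun r ↦ (α r : ℂ)) * E)).re =
      ∑ j, ∑ r, α r * Complex.normSq (E r j) := by
    simp only [trace, diag_apply, mul_apply (N := E), mul_diagonal, Complex.re_sum]
    refine Finset.sum_congr rfl fun j _ ↦ Finset.sum_congr rfl fun r _ ↦ ?_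
    simp [Complex.normSq_apply]
    ring
  rw [htrace]
  refine Finset.sum_le_sum fun j _ ↦ ?_
  calc τ j = ∑ r, τ j * Complex.normSq (E r j) := by rw [← Finset.mul_sum, hcol, mul_one]
    _ ≤ ∑ r, α r * Complex.normSq (E r j) := Finset.sum_le_sum fun r _ ↦ ?_
  obtain h | h := le_or_gt (τ j) (α r)
  · exact mul_le_mul_of_nonneg_right h (Complex.normSq_nonneg _)
  · simp [hE.apply_eq_zero r j h]

end Frames

section SchubertVarieties

theorem isCompact_setOf_conjTranspose_mul_self_eq_one (𝕜 m p : Type*) [RCLike 𝕜] [Fintype m]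
    [DecidableEq p] : IsCompact {X : Matrix m p 𝕜 | Xᴴ * X = 1} := by
  have hbounded : IsCompact (Set.univ.pi fun _ : m ↦ Set.univ.pi fun _ : p ↦
      Metric.closedBall (0 : 𝕜) 1) :=
    isCompact_univ_pi fun _ ↦ isCompact_univ_pi fun _ ↦ isCompact_closedBall 0 1
  have hclosed : IsClosed {X : Matrix m p 𝕜 | Xᴴ * X = 1} :=
    isClosed_eq (by fun_prop) continuous_const
  refine hbounded.of_isClosed_subset hclosed ?_
  rintro (X : Matrix m p 𝕜) (hX : Xᴴ * X = 1) r - j -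
  have hcol : ∑ s, ‖X s j‖ ^ 2 = 1 := by
    have := congrFun₂ hX j j
    simp only [mul_apply, conjTranspose_apply, one_apply_eq, RCLike.star_def,
      RCLike.conj_mul] at this
    exact_mod_cast this
  rw [mem_closedBall_zero_iff, ← sq_le_one_iff₀ (norm_nonneg _), ← hcol]
  exact Finset.single_le_sum (f := fun s ↦ ‖X s j‖ ^ 2) (fun _ _ ↦ by positivity)
    (Finset.mem_univ r)

variable {ι m p : Type*} [Fintype m] [Fintype p] [DecidableEq p]
  {α : ι → m → ℝ} {τ : ι → p → ℝ}

/-- The translates by `g i` of the Schubert varieties with levels `τ i` for the flags of superlevel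
sets of `α i` have a common point. This point is the column space of the isometry `X`, and the last
equation says that it contains the column space of `g i * E`. -/
def SchubertMeet (α : ι → m → ℝ) (τ : ι → p → ℝ) (g : ι → Matrix m m ℂ) : Prop :=
  ∃ X : Matrix m p ℂ, Xᴴ * X = 1 ∧
    ∀ i, ∃ E : Matrix m p ℂ, IsSchubertFrame (α i) (τ i) E ∧ X * Xᴴ * (g i * E) = g i * E

theorem isClosed_setOf_schubertMeet : IsClosed {g | SchubertMeet α τ g} := by
  have : CompactSpace {X : Matrix m p ℂ // Xᴴ * X = 1} :=
    isCompact_iff_compactSpace.1 (isCompact_setOf_conjTranspose_mul_self_eq_one ℂ m p)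
  have himage : {g | SchubertMeet α τ g} = Prod.fst '' {x : (ι → Matrix m m ℂ) ×
      {X : Matrix m p ℂ // Xᴴ * X = 1} × (ι → {X : Matrix m p ℂ // Xᴴ * X = 1}) |
      (∀ i r j, α i r < τ i j → (x.2.2 i).1 r j = 0) ∧
      ∀ i, x.2.1.1 * x.2.1.1ᴴ * (x.1 i * (x.2.2 i).1) = x.1 i * (x.2.2 i).1} := by
    ext g
    constructor
    · rintro ⟨X, hX, h⟩
      choose E hE hXE using h
      exact ⟨⟨g, ⟨X, hX⟩, fun i ↦ ⟨E i, (hE i).conjTranspose_mul_self⟩⟩,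
        ⟨fun i ↦ (hE i).apply_eq_zero, hXE⟩, rfl⟩
    · rintro ⟨⟨g, X, E⟩, ⟨hzero, hXE⟩, rfl⟩
      exact ⟨X.1, X.2, fun i ↦ ⟨(E i).1, ⟨(E i).2, hzero i⟩, hXE i⟩⟩
  rw [himage]
  refine isClosedMap_fst_of_compactSpace _ ?_
  simp only [Set.ofPred_and, Set.ofPred_forall]
  refine .inter (isClosed_iInter fun i ↦ isClosed_iInter fun r ↦ isClosed_iInter fun j ↦
    isClosed_iInter fun _ ↦ isClosed_eq (.matrix_elem ?_ r j) ?_)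
    (isClosed_iInter fun i ↦ isClosed_eq ?_ ?_)
  all_goals fun_prop

theorem SchubertMeet.exists_sum_le_re_trace [DecidableEq m] {G : ι → Matrix m m ℂ}
    (h : SchubertMeet α τ G) (hG : ∀ i, (G i)ᴴ * G i = 1) :
    ∃ P : Matrix m m ℂ, ∀ i,
      ∑ j, τ i j ≤ (trace (P * (G i * diagonal (fun r ↦ (α i r : ℂ)) * (G i)ᴴ))).re := by
  obtain ⟨X, -, h⟩ := h
  choose E hE hXE using h
  have hproj (i : ι) : X * Xᴴ = G i * E i * (G i * E i)ᴴ := by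
    set M := Xᴴ * (G i * E i)
    have hM : Mᴴ * M = 1 := by
      calc Mᴴ * M = (G i * E i)ᴴ * (X * Xᴴ * (G i * E i)) := by simp [M, Matrix.mul_assoc]
        _ = (E i)ᴴ * ((G i)ᴴ * G i) * E i := by simp [hXE, Matrix.mul_assoc]
        _ = 1 := by simp [hG, (hE i).conjTranspose_mul_self]
    calc X * Xᴴ = X * (M * Mᴴ) * Xᴴ := by rw [mul_eq_one_comm.1 hM, Matrix.mul_one]
      _ = X * Xᴴ * (G i * E i) * (X * Xᴴ * (G i * E i))ᴴ := by simp [M, Matrix.mul_assoc]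
      _ = G i * E i * (G i * E i)ᴴ := by rw [hXE]
  refine ⟨X * Xᴴ, fun i ↦ (hE i).sum_le_re_trace.trans_eq (congrArg Complex.re ?_)⟩
  set Λ := diagonal fun r ↦ (α i r : ℂ)
  calc trace ((E i)ᴴ * Λ * E i)
      = trace ((G i * E i)ᴴ * (G i * Λ * (G i)ᴴ * (G i * E i))) := by
        simp [Matrix.mul_assoc, ← Matrix.mul_assoc (G i)ᴴ (G i), hG]
    _ = trace (X * Xᴴ * (G i * Λ * (G i)ᴴ)) := by
        rw [hproj i, Matrix.mul_assoc (G i * E i), trace_mul_comm (G i * E i),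
          Matrix.mul_assoc ((G i * E i)ᴴ)]

end SchubertVarieties

section GraphsMeetSchubert

theorem exists_conjTranspose_mul_self_eq_one {𝕜 m p : Type*} [RCLike 𝕜] [Fintype m] [Fintype p]
    [DecidableEq p] {E : Matrix m p 𝕜} (hE : Function.Injective E.mulVec) :
    ∃ N : Matrix p p 𝕜, (E * N)ᴴ * (E * N) = 1 := by
  let : LinearOrder p := .lift' (Fintype.equivFin p) (Fintype.equivFin p).injective
  obtain ⟨N, -, hN⟩ := exists_blockTriangular_conjTranspose_mul_self_eq_one hE
  exact ⟨N, hN.trans (by congr!)⟩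

variable {ι p q : Type*} [Fintype p] [Fintype q] [DecidableEq p]

theorem GraphsMeet.schubertMeet {α : ι → p ⊕ q → ℝ} {g : ι → Matrix (p ⊕ q) (p ⊕ q) ℂ}
    (h : GraphsMeet (fun i y x ↦ α i (.inl x) ≤ α i (.inr y)) g) :
    SchubertMeet α (fun i ↦ α i ∘ .inl) g := by
  obtain ⟨φ, s, hs, hdefect⟩ := h
  have hinj (ψ : Matrix q p ℂ) : Function.Injective (fromRows (1 : Matrix p p ℂ) ψ).mulVec :=
    fun v w hvw ↦ by simpa [fromRows_mulVec] using congrArg (· ∘ Sum.inl) hvw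
  obtain ⟨N, hN⟩ := exists_conjTranspose_mul_self_eq_one (hinj φ)
  set F := fromRows (1 : Matrix p p ℂ) φ
  have hF : F * N * (F * N)ᴴ * F = F := by
    have : (F * N)ᴴ * F * N = 1 := by rw [Matrix.mul_assoc, hN]
    rw [Matrix.mul_assoc, Matrix.mul_assoc, mul_eq_one_comm.1 this, Matrix.mul_one]
  have hg (i : ι) : g i * fromRows (1 : Matrix p p ℂ) (s i) =
      F * ((g i).toBlocks₁₁ + (g i).toBlocks₁₂ * s i) := by
    conv_lhs => rw [← fromBlocks_toBlocks (g i), fromBlocks_mul_fromRows]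
    simp [F, fromRows_mul, sub_eq_zero.1 (hdefect i)]
  have hframe (i : ι) :
      ∃ M : Matrix p p ℂ, IsSchubertFrame (α i) (α i ∘ .inl) (fromRows 1 (s i) * M) := by
    refine exists_isSchubertFrame_mul (hinj _) ?_
    rintro (x | y) j hj
    · exact one_apply_ne fun h ↦ hj.ne (by simp [h])
    · exact hs i y j (not_le.2 hj)
  refine ⟨F * N, hN, fun i ↦ ?_⟩
  obtain ⟨M, hM⟩ := hframe i
  refine ⟨_, hM, ?_⟩
  rw [← Matrix.mul_assoc (g i), hg, ← Matrix.mul_assoc, ← Matrix.mul_assoc _ F, hF]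

end GraphsMeetSchubert

section Transversality

open Topology

theorem eventually_exists_eq_of_hasStrictFDerivAt {𝕜 E V W : Type*} [NontriviallyNormedField 𝕜]
    [NormedAddCommGroup E] [NormedSpace 𝕜 E] [CompleteSpace E]
    [NormedAddCommGroup V] [NormedSpace 𝕜 V] [CompleteSpace V]
    [NormedAddCommGroup W] [NormedSpace 𝕜 W] [CompleteSpace W]
    {F : E × V → W} {F' : E × V →L[𝕜] W} {x₀ : E} {v₀ : V}
    (hF : HasStrictFDerivAt F F' (x₀, v₀))
    (hF' : Function.Surjective (F'.comp (.inr 𝕜 E V))) :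
    ∀ᶠ x in 𝓝 x₀, ∃ v, F (x, v) = F (x₀, v₀) := by
  have hΦ := (hasStrictFDerivAt_fst (𝕜 := 𝕜) (p := (x₀, v₀))).prodMk hF
  have hsurj : ((ContinuousLinearMap.fst 𝕜 E V).prod F').range = ⊤ := by
    refine LinearMap.range_eq_top.2 fun ⟨x, w⟩ ↦ ?_
    obtain ⟨v, hv⟩ := hF' (w - F' (x, 0))
    refine ⟨(x, v), Prod.ext rfl ?_⟩
    have : F' (x, v) = F' (x, 0) + F' (0, v) := by simp [← map_add]
    simpa [this] using congrArg (F' (x, 0) + ·) hv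
  have hrange : ∀ᶠ y in 𝓝 (x₀, F (x₀, v₀)), ∃ u : E × V, (u.1, F u) = y := by
    rw [← hΦ.map_nhds_eq_of_surj hsurj]
    exact Filter.eventually_map.2 (.of_forall fun u ↦ ⟨u, rfl⟩)
  filter_upwards [(Continuous.prodMk_left (F (x₀, v₀))).continuousAt.eventually hrange]
    with x ⟨⟨x', v⟩, hu⟩
  obtain ⟨rfl, hv⟩ := Prod.mk.inj hu
  exact ⟨v, hv⟩

theorem hasFDerivAt_zero_apply_of_map_smul {𝕜 V W : Type*} [NontriviallyNormedField 𝕜]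
    [NormedAddCommGroup V] [NormedSpace 𝕜 V] [NormedAddCommGroup W] [NormedSpace 𝕜 W]
    {f : V → W} {f' : V →L[𝕜] W} (hf : HasFDerivAt f f' 0)
    (hsmul : ∀ (t : 𝕜) v, f (t • v) = t • f v) (v : V) : f' v = f v := by
  have hline : HasDerivAt (fun t : 𝕜 ↦ f (t • v)) (f' v) 0 :=
    hf.comp_hasDerivAt_of_eq 0 (by simpa using (hasDerivAt_id (0 : 𝕜)).smul_const v) (by simp)
  simp only [hsmul] at hline
  exact hline.unique (by simpa using (hasDerivAt_id (0 : 𝕜)).smul_const (f v))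

theorem eventually_exists_eq_zero_of_contDiff_of_surjective {𝕜 E V W : Type*} [RCLike 𝕜]
    [NormedAddCommGroup E] [NormedSpace 𝕜 E] [CompleteSpace E]
    [NormedAddCommGroup V] [NormedSpace 𝕜 V] [CompleteSpace V]
    [NormedAddCommGroup W] [NormedSpace 𝕜 W] [CompleteSpace W]
    {F : E × V → W} (hF : ContDiff 𝕜 1 F) (hsmul : ∀ (t : 𝕜) v, F (0, t • v) = t • F (0, v))
    (hsurj : Function.Surjective fun v ↦ F (0, v)) : ∀ᶠ x in 𝓝 (0 : E), ∃ v, F (x, v) = 0 := by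
  have hF' : HasStrictFDerivAt F (fderiv 𝕜 F 0) (0, 0) :=
    hF.contDiffAt.hasStrictFDerivAt one_ne_zero
  have hderiv := hasFDerivAt_zero_apply_of_map_smul
    (hF'.hasFDerivAt.comp 0 (hasFDerivAt_prodMk_right (0 : E) 0)) hsmul
  have hF0 : F (0, 0) = 0 := by simpa using hsmul 0 0
  simpa only [hF0] using eventually_exists_eq_of_hasStrictFDerivAt hF' fun w ↦
    (hsurj w).imp fun v hv ↦ (hderiv v).trans hv

theorem exists_linearMap_eq_sum_trace_mul {ι p q K : Type*} [Fintype ι] [Fintype p] [Fintype q]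
    [CommRing K] (f : (ι → Matrix q p K) →ₗ[K] K) :
    ∃ Z : ι → Matrix p q K, ∀ C, f C = ∑ i, trace (Z i * C i) := by
  classical
  refine ⟨fun i ↦ of fun x y ↦ f (Pi.single i (single y x 1)), fun C ↦ ?_⟩
  have hg (g : Matrix q p K →ₗ[K] K) (M : Matrix q p K) :
      g M = trace ((of fun x y ↦ g (single y x 1)) * M) := by
    have hM : M = ∑ x, ∑ y, M y x • single y x 1 := by
      rw [Finset.sum_comm]
      simpa using matrix_eq_sum_single M
    conv_lhs => rw [hM]
    simp only [map_sum, map_smul, trace, diag_apply, mul_apply, of_apply, smul_eq_mul, mul_comm]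
  conv_lhs => rw [← Finset.univ_sum_single C, map_sum]
  exact Finset.sum_congr rfl fun i _ ↦
    hg (f ∘ₗ LinearMap.single K (fun _ : ι ↦ Matrix q p K) i) (C i)

variable {ι p q : Type*} [Fintype p] [Fintype q]

/-- The range of the derivative, at zero, of the equations of `GraphsMeet` for the block diagonal
matrices with blocks `Q i` and `P i`. -/
def graphTangents {K : Type*} [Field K] (S : ι → q → p → Prop) (P : ι → Matrix q q K)
    (Q : ι → Matrix p p K) : Submodule K (ι → Matrix q p K) where
  carrier := {C | ∃ (φ : Matrix q p K) (s : ι → Matrix q p K),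
    (∀ i y x, ¬ S i y x → s i y x = 0) ∧ ∀ i, P i * s i - φ * Q i = C i}
  zero_mem' := ⟨0, 0, by simp⟩
  add_mem' := by
    rintro C C' ⟨φ, s, hs, hC⟩ ⟨φ', s', hs', hC'⟩
    refine ⟨φ + φ', s + s', fun i y x hk ↦ by simp [hs i y x hk, hs' i y x hk], fun i ↦ ?_⟩
    simp only [Pi.add_apply, ← hC, ← hC', Matrix.mul_add, Matrix.add_mul]
    abel
  smul_mem' := by
    rintro a C ⟨φ, s, hs, hC⟩
    refine ⟨a • φ, a • s, fun i y x hk ↦ by simp [hs i y x hk], fun i ↦ ?_⟩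
    simp [← hC, smul_sub]

theorem graphTangents_eq_top [Fintype ι] {K : Type*} [Field K] {S : ι → q → p → Prop}
    {P : ι → Matrix q q K} {Q : ι → Matrix p p K}
    (h : ∀ Z : ι → Matrix p q K, (∀ i y x, S i y x → (Z i * P i) x y = 0) →
      ∑ i, Q i * Z i = 0 → Z = 0) : graphTangents S P Q = ⊤ := by
  classical
  by_contra hne
  obtain ⟨f, hf, hker⟩ := Submodule.exists_le_ker_of_lt_top _ (lt_top_iff_ne_top.2 hne)
  obtain ⟨Z, hZ⟩ := exists_linearMap_eq_sum_trace_mul f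
  refine hf (LinearMap.ext fun C ↦ ?_)
  have hZ0 {C : ι → Matrix q p K} (hC : C ∈ graphTangents S P Q) : ∑ i, trace (Z i * C i) = 0 :=
    (hZ C).symm.trans (hker hC)
  have hZP (i y x) (hk : S i y x) : (Z i * P i) x y = 0 := by
    have := hZ0 ⟨0, Pi.single i (single y x 1), fun i' y' x' hk' ↦ ?_, fun i' ↦ rfl⟩
    · rw [Finset.sum_eq_single i (by simp +contextual) (by simp)] at this
      simpa [← Matrix.mul_assoc, trace_mul_single] using this
    · obtain rfl | hi := eq_or_ne i' i
      · simp only [Pi.single_eq_same]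
        refine single_apply_of_ne _ _ _ _ _ ?_
        rintro ⟨rfl, rfl⟩
        exact hk' hk
      · simp [hi]
  have hQZ : ∑ i, Q i * Z i = 0 := by
    refine ext_iff_trace_mul_right.2 fun φ ↦ ?_
    have := hZ0 ⟨φ, 0, by simp, fun i ↦ rfl⟩
    simpa [Matrix.sum_mul, trace_sum, Matrix.mul_assoc, trace_mul_comm (Q _)] using this
  simp [hZ, h Z hZP hQZ]

theorem eventually_graphsMeet_add_smul [Finite ι] {S : ι → q → p → Prop}
    {P : ι → Matrix q q ℂ} {Q : ι → Matrix p p ℂ} (h : graphTangents S P Q = ⊤)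
    (B : ι → Matrix (p ⊕ q) (p ⊕ q) ℂ) :
    ∀ᶠ z in 𝓝 (0 : ℂ), GraphsMeet S fun i ↦ fromBlocks (Q i) 0 0 (P i) + z • B i := by
  classical
  have := Fintype.ofFinite ι
  let mask (s : ι → q → p → ℂ) (i : ι) : Matrix q p ℂ :=
    of fun y x ↦ (if S i y x then 1 else 0) * s i y x
  let F (u : ℂ × (q → p → ℂ) × (ι → q → p → ℂ)) (i : ι) : q → p → ℂ :=
    graphDefect (fromBlocks (Q i) 0 0 (P i) + u.1 • B i) (of u.2.1) (mask u.2.2 i)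
  have hF : ContDiff ℂ 1 F := by
    refine contDiff_pi.2 fun i ↦ contDiff_pi.2 fun y ↦ contDiff_pi.2 fun x ↦ ?_
    simp only [F, graphDefect, mask, mul_apply, Matrix.sub_apply, Matrix.add_apply, toBlocks₁₁,
      toBlocks₁₂, toBlocks₂₁, toBlocks₂₂, of_apply, Matrix.smul_apply, smul_eq_mul]
    fun_prop
  have hF0 (v : (q → p → ℂ) × (ι → q → p → ℂ)) (i : ι) :
      F (0, v) i = P i * mask v.2 i - of v.1 * Q i := by
    change graphDefect _ _ _ = _
    simp [graphDefect]
  have hsmul (t : ℂ) (v : (q → p → ℂ) × (ι → q → p → ℂ)) : F (0, t • v) = t • F (0, v) := by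
    have hmask (i : ι) : mask (t • v.2) i = t • mask v.2 i := by
      ext y x
      simp [mask]
    ext1 i
    rw [Pi.smul_apply, hF0, hF0, Prod.smul_snd, hmask, Matrix.mul_smul, Prod.smul_fst, ← smul_of,
      Matrix.smul_mul, ← smul_sub]
    rfl
  have hsurj : Function.Surjective fun v ↦ F (0, v) := by
    intro C
    obtain ⟨φ, s, hs, hC⟩ : (fun i ↦ of (C i)) ∈ graphTangents S P Q := h ▸ Submodule.mem_top
    have hmask (i : ι) : mask s i = s i := by
      ext y x
      simpa [mask, eq_comm] using hs i y x
    refine ⟨(φ, s), funext fun i ↦ (hF0 (φ, s) i).trans ?_⟩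
    rw [hmask]
    exact hC i
  filter_upwards [eventually_exists_eq_zero_of_contDiff_of_surjective hF hsmul hsurj]
    with z ⟨⟨φ, s⟩, hz⟩
  exact ⟨of φ, mask s, fun i y x hk ↦ by simp [mask, hk], congrFun hz⟩

theorem schubertMeet_of_transversal [Fintype ι] [DecidableEq p] {α : ι → p ⊕ q → ℝ}
    {P : ι → Matrix q q ℂ} {Q : ι → Matrix p p ℂ}
    (h : ∀ Z : ι → Matrix p q ℂ,
      (∀ i y x, α i (.inl x) ≤ α i (.inr y) → (Z i * P i) x y = 0) →
        ∑ i, Q i * Z i = 0 → Z = 0) (G : ι → Matrix (p ⊕ q) (p ⊕ q) ℂ) :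
    SchubertMeet α (fun i ↦ α i ∘ .inl) G := by
  let line (z : ℂ) (i : ι) : Matrix (p ⊕ q) (p ⊕ q) ℂ :=
    fromBlocks (Q i) 0 0 (P i) + z • (G i - fromBlocks (Q i) 0 0 (P i))
  set T := {z | GraphsMeet (fun i y x ↦ α i (.inl x) ≤ α i (.inr y)) (line z)}
  have hT : Tᶜ.Finite := finite_compl_setOf_graphsMeet_add_smul _ _
    (infinite_of_mem_nhds 0 (eventually_graphsMeet_add_smul (graphTangents_eq_top h) _))
  have hclosed : IsClosed {z | SchubertMeet α (fun i ↦ α i ∘ .inl) (line z)} :=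
    isClosed_setOf_schubertMeet.preimage (by fun_prop)
  have hdense : Dense T := by simpa using hT.countable.dense_compl ℂ
  have : (1 : ℂ) ∈ {z | SchubertMeet α (fun i ↦ α i ∘ .inl) (line z)} :=
    hclosed.closure_subset_iff.2 (fun z hz ↦ GraphsMeet.schubertMeet hz) (hdense 1)
  simpa [line] using this

end Transversality

section SecondVariation

open Topology

theorem nonneg_of_isLocalMin_of_hasDerivAt {f f' : ℝ → ℝ} {x c : ℝ} (hmin : IsLocalMin f x)
    (hf : ∀ t, HasDerivAt f (f' t) t) (hf' : HasDerivAt f' c x) : 0 ≤ c := by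
  have hderiv : deriv f = f' := funext fun t ↦ (hf t).deriv
  by_contra! hc
  have hmax : IsLocalMax f x := isLocalMax_of_deriv_deriv_neg (by rwa [hderiv, hf'.deriv])
    hmin.deriv_eq_zero (hf x).continuousAt
  have hconst : f =ᶠ[𝓝 x] fun _ ↦ f x :=
    hmax.and hmin |>.mono fun t ht ↦ le_antisymm ht.1 ht.2
  have hzero : f' =ᶠ[𝓝 x] fun _ ↦ 0 := by simpa [hderiv] using hconst.deriv
  exact hc.ne (by simpa [hf'.deriv] using hzero.deriv_eq)

variable {𝔸 : Type*} [NormedRing 𝔸] [NormedAlgebra ℝ 𝔸]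

theorem hasDerivAt_exp_smul_mul_mul_exp_smul_neg [CompleteSpace 𝔸] (X A : 𝔸) (t : ℝ) :
    HasDerivAt (fun t : ℝ ↦ NormedSpace.exp (t • X) * A * NormedSpace.exp (t • -X))
      (NormedSpace.exp (t • X) * ⁅X, A⁆ * NormedSpace.exp (t • -X)) t := by
  refine (((hasDerivAt_exp_smul_const (𝕂 := ℝ) X t).mul_const A).mul
    (hasDerivAt_exp_smul_const' (𝕂 := ℝ) (-X) t)).congr_deriv ?_
  simp only [Ring.lie_def, mul_sub, sub_mul, mul_assoc, neg_mul, mul_neg, ← sub_eq_add_neg]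

theorem variations_of_isMin_trace_mul_self {T : 𝔸 →L[ℝ] ℝ} (hT : ∀ a b, T (a * b) = T (b * a))
    {S S' : ℝ → 𝔸} {S'' : 𝔸} (hmin : ∀ t, T (S 0 * S 0) ≤ T (S t * S t))
    (hS : ∀ t, HasDerivAt S (S' t) t) (hS' : HasDerivAt S' S'' 0) :
    T (S 0 * S' 0) = 0 ∧ (S' 0 = 0 → 0 ≤ T (S 0 * S'')) := by
  have hlocal : IsLocalMin (fun t ↦ T (S t * S t)) 0 := .of_forall hmin
  have hderiv (t : ℝ) : HasDerivAt (fun t ↦ T (S t * S t)) (2 * T (S t * S' t)) t := by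
    refine (T.hasFDerivAt.comp_hasDerivAt t ((hS t).mul (hS t))).congr_deriv ?_
    rw [map_add, hT (S' t)]
    ring
  have hderiv₂ : HasDerivAt (fun t ↦ 2 * T (S t * S' t)) (2 * T (S' 0 * S' 0 + S 0 * S'')) 0 :=
    (T.hasFDerivAt.comp_hasDerivAt 0 ((hS 0).mul hS')).const_mul 2
  refine ⟨by simpa using hlocal.hasDerivAt_eq_zero (hderiv 0), fun h ↦ ?_⟩
  have := nonneg_of_isLocalMin_of_hasDerivAt hlocal hderiv hderiv₂
  rw [h, mul_zero, zero_add] at this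
  linarith

end SecondVariation

section MinimalSum

variable {ι m : Type*} [Fintype ι] [Fintype m] [DecidableEq m]

/-- The sum of the Hermitian matrices `A i` has minimal Hilbert–Schmidt norm among the sums of
unitary conjugates of the `A i`. The square of the norm of a Hermitian matrix `S` is written as
`tr (S * S)`. -/
def HasMinimalSum (A : ι → Matrix m m ℂ) : Prop :=
  ∀ W : ι → unitaryGroup m ℂ, (trace ((∑ i, A i) * ∑ i, A i)).re ≤
    (trace ((∑ i, (W i).1 * A i * (W i).1ᴴ) *
      ∑ i, (W i).1 * A i * (W i).1ᴴ)).re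

theorem exists_hasMinimalSum (A : ι → Matrix m m ℂ) :
    ∃ V : ι → unitaryGroup m ℂ,
      HasMinimalSum fun i ↦ (V i).1 * A i * (V i).1ᴴ := by
  have : CompactSpace (unitaryGroup m ℂ) := by
    refine isCompact_iff_compactSpace.1 ?_
    convert isCompact_setOf_conjTranspose_mul_self_eq_one ℂ m m using 1
    exact Set.ext fun _ ↦ mem_unitaryGroup_iff'
  obtain ⟨V, -, hV⟩ := isCompact_univ.exists_isMinOn (Set.univ_nonempty)
    (f := fun W : ι → unitaryGroup m ℂ ↦
      (trace ((∑ i, (W i).1 * A i * (W i).1ᴴ) *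
        ∑ i, (W i).1 * A i * (W i).1ᴴ)).re)
    (Complex.continuous_re.comp (.matrix_trace (by fun_prop))).continuousOn
  refine ⟨V, fun W ↦ (isMinOn_iff.1 hV (W * V) trivial).trans_eq ?_⟩
  simp [Matrix.mul_assoc]

theorem HasMinimalSum.variations {A : ι → Matrix m m ℂ} (hA : HasMinimalSum A)
    {X : ι → Matrix m m ℂ} (hX : ∀ i, (X i)ᴴ = -X i) :
    (trace ((∑ i, A i) * ∑ i, ⁅X i, A i⁆)).re = 0 ∧
      (∑ i, ⁅X i, A i⁆ = 0 → 0 ≤ (trace ((∑ i, A i) * ∑ i, ⁅X i, ⁅X i, A i⁆⁆)).re) := by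
  open scoped Matrix.Norms.Operator in
  have hexp (i : ι) (t : ℝ) :
      NormedSpace.exp (t • -X i) = (NormedSpace.exp (t • X i))ᴴ := by
    simp [← Matrix.exp_conjTranspose, conjTranspose_smul, hX]
  have hunitary (i : ι) (t : ℝ) : NormedSpace.exp (t • X i) ∈ unitaryGroup m ℂ := by
    rw [mem_unitaryGroup_iff, star_eq_conjTranspose, ← hexp, smul_neg, Matrix.exp_neg]
    exact mul_nonsing_inv _ ((isUnit_iff_isUnit_det _).1 (Matrix.isUnit_exp _))
  let T : Matrix m m ℂ →L[ℝ] ℝ :=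
    LinearMap.toContinuousLinearMap (Complex.reLm ∘ₗ (traceLinearMap m ℝ ℂ))
  let S (B : ι → Matrix m m ℂ) (t : ℝ) : Matrix m m ℂ :=
    ∑ i, NormedSpace.exp (t • X i) * B i * NormedSpace.exp (t • -X i)
  have hS (B : ι → Matrix m m ℂ) (t : ℝ) : HasDerivAt (S B) (S (fun i ↦ ⁅X i, B i⁆) t) t :=
    .fun_sum fun i _ ↦ hasDerivAt_exp_smul_mul_mul_exp_smul_neg (X i) (B i) t
  have hS0 (B : ι → Matrix m m ℂ) : S B 0 = ∑ i, B i := by simp [S]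
  have hmin (t : ℝ) : T (S A 0 * S A 0) ≤ T (S A t * S A t) := by
    simpa [-smul_neg, hS0, T, S, hexp] using hA fun i ↦ ⟨_, hunitary i t⟩
  have := variations_of_isMin_trace_mul_self
    (fun a b ↦ congrArg Complex.re (trace_mul_comm a b)) hmin (hS A) (hS _ 0)
  simp only [hS0] at this
  exact this

theorem trace_mul_lie {m R : Type*} [Fintype m] [CommRing R] (A B C : Matrix m m R) :
    trace (A * ⁅B, C⁆) = trace (⁅C, A⁆ * B) := by
  rw [Ring.lie_def, Ring.lie_def, Matrix.mul_sub, Matrix.sub_mul, trace_sub, trace_sub,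
    ← Matrix.mul_assoc, trace_mul_cycle, ← Matrix.mul_assoc]

open scoped ComplexOrder in
theorem HasMinimalSum.commute {A : ι → Matrix m m ℂ} (hA : HasMinimalSum A)
    (hherm : ∀ i, (A i).IsHermitian) (i : ι) : Commute (∑ i, A i) (A i) := by
  set D := ∑ i, A i
  have hD : D.IsHermitian := isSelfAdjoint_sum _ fun i _ ↦ hherm i
  have hskew (i : ι) : ⁅A i, D⁆ᴴ = -⁅A i, D⁆ := by
    simp [Ring.lie_def, (hherm i).eq, hD.eq]
  have htrace (i : ι) : trace (D * ⁅⁅A i, D⁆, A i⁆) = -trace (⁅A i, D⁆ᴴ * ⁅A i, D⁆) := by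
    rw [hskew, Matrix.neg_mul, trace_neg, neg_neg, trace_mul_lie]
  have hnonneg (i : ι) : 0 ≤ trace (⁅A i, D⁆ᴴ * ⁅A i, D⁆) :=
    (posSemidef_conjTranspose_mul_self _).trace_nonneg
  have hsum : (trace (D * ∑ i, ⁅⁅A i, D⁆, A i⁆)).re = 0 := (hA.variations hskew).1
  simp only [Matrix.mul_sum, trace_sum, htrace, Complex.re_sum, Complex.neg_re,
    Finset.sum_neg_distrib, neg_eq_zero] at hsum
  have hre : (trace (⁅A i, D⁆ᴴ * ⁅A i, D⁆)).re = 0 :=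
    (Finset.sum_eq_zero_iff_of_nonneg fun i _ ↦ (Complex.le_def.1 (hnonneg i)).1).1 hsum
      i (Finset.mem_univ i)
  have hlie : ⁅A i, D⁆ = 0 := trace_conjTranspose_mul_self_eq_zero_iff.1
    (Complex.ext hre (Complex.le_def.1 (hnonneg i)).2.symm)
  exact (sub_eq_zero.1 hlie).symm

end MinimalSum

section UnitaryConjugates

theorem trace_submatrix_equiv {m n R : Type*} [Fintype m] [Fintype n] [AddCommMonoid R]
    (B : Matrix m m R) (f : n ≃ m) : trace (B.submatrix f f) = trace B :=
  f.sum_comp fun r ↦ B r r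

theorem sum_submatrix {ι m n m' n' R : Type*} [Fintype ι] [AddCommMonoid R] (B : ι → Matrix m n R)
    (f : m' → m) (g : n' → n) : ∑ i, (B i).submatrix f g = (∑ i, B i).submatrix f g := by
  ext
  simp [Matrix.sum_apply]

theorem trace_conj_of_mem_unitaryGroup {m R : Type*} [Fintype m] [DecidableEq m] [CommRing R]
    [StarRing R] {U : Matrix m m R} (hU : U ∈ unitaryGroup m R) (B : Matrix m m R) :
    trace (U * B * Uᴴ) = trace B := by
  have h : Uᴴ * U = 1 := mem_unitaryGroup_iff'.1 hU
  rw [trace_mul_comm, ← Matrix.mul_assoc, h, Matrix.one_mul]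

theorem submatrix_mem_unitaryGroup {m n R : Type*} [Fintype m] [DecidableEq m] [Fintype n]
    [DecidableEq n] [CommRing R] [StarRing R] {U : Matrix m m R} (hU : U ∈ unitaryGroup m R)
    (f : n ≃ m) : U.submatrix f f ∈ unitaryGroup n R := by
  have h : U * Uᴴ = 1 := mem_unitaryGroup_iff.1 hU
  rw [mem_unitaryGroup_iff, star_eq_conjTranspose, conjTranspose_submatrix,
    submatrix_mul_equiv, h, submatrix_one_equiv]

end UnitaryConjugates

section CommutingHermitian

variable {m 𝕜 : Type*} [Fintype m] [DecidableEq m] [RCLike 𝕜]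

theorem commute_diagonal_iff {K : Type*} [CommRing K] [IsDomain K] {d : m → K}
    {A : Matrix m m K} : Commute (diagonal d) A ↔ ∀ r s, d r ≠ d s → A r s = 0 := by
  rw [commute_iff_eq, ← Matrix.ext_iff]
  refine forall₂_congr fun r s ↦ ?_
  rw [diagonal_mul, mul_diagonal, mul_comm, mul_eq_mul_left_iff, or_iff_not_imp_left]

theorem exists_unitary_commute_diagonal {δ : m → ℝ} {A : Matrix m m 𝕜} (hA : A.IsHermitian)
    (hδ : Commute (diagonal fun r ↦ (δ r : 𝕜)) A) :
    ∃ (R : unitaryGroup m 𝕜) (α : m → ℝ),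
      Commute (diagonal fun r ↦ (δ r : 𝕜)) R.1 ∧ A = R.1 * diagonal (fun r ↦ (α r : 𝕜)) * R.1ᴴ := by
  classical
  let e := Equiv.sigmaFiberEquiv (Set.rangeFactorization δ)
  have he (x) : δ (e x) = x.1 := congrArg Subtype.val x.2.2
  let B := (A.submatrix e e).blockDiag'
  have hB (c : Set.range δ) : (B c).IsHermitian := (hA.submatrix e).submatrix (Sigma.mk c)
  have hAB : A.submatrix e e = blockDiagonal' B := by
    ext ⟨c, r⟩ ⟨d, s⟩
    obtain rfl | h := eq_or_ne c d
    · simp [B, blockDiag'_apply]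
    · rw [blockDiagonal'_apply_ne _ _ _ h, submatrix_apply]
      exact commute_diagonal_iff.1 hδ _ _ (by simpa [he, Subtype.ext_iff] using h)
  let R := blockDiagonal' fun c ↦ (hB c).eigenvectorUnitary.1
  have hR : R ∈ unitaryGroup _ 𝕜 := by
    rw [mem_unitaryGroup_iff, star_eq_conjTranspose, blockDiagonal'_conjTranspose,
      ← blockDiagonal'_mul, ← blockDiagonal'_one]
    exact congrArg _ (funext fun c ↦ mem_unitaryGroup_iff.1 (hB c).eigenvectorUnitary.2)
  have hspectral : blockDiagonal' B =
      R * diagonal (fun x ↦ ((hB x.1).eigenvalues x.2 : 𝕜)) * Rᴴ := by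
    rw [blockDiagonal'_conjTranspose,
      ← blockDiagonal'_diagonal fun c r ↦ ((hB c).eigenvalues r : 𝕜), ← blockDiagonal'_mul,
      ← blockDiagonal'_mul]
    exact congrArg _ (funext fun c ↦ (hB c).spectral_theorem)
  refine ⟨⟨R.submatrix e.symm e.symm, submatrix_mem_unitaryGroup hR e.symm⟩,
    fun r ↦ (hB _).eigenvalues (e.symm r).2, ?_, ?_⟩
  · refine commute_diagonal_iff.2 fun r s h ↦ ?_
    refine (submatrix_apply ..).trans (blockDiagonal'_apply_ne _ _ _ fun h' ↦ h ?_)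
    simpa [he] using congrArg (fun c : Set.range δ ↦ (c : 𝕜)) h'
  · have hA : A = (blockDiagonal' B).submatrix e.symm e.symm := by simp [← hAB]
    rw [hA, hspectral, ← submatrix_mul_equiv _ _ _ e.symm, ← submatrix_mul_equiv _ _ _ e.symm,
      submatrix_diagonal_equiv]
    rfl

end CommutingHermitian

section Hessian

variable {ι m : Type*} [Fintype ι] [Fintype m] [DecidableEq m]

theorem exists_lie_diagonal_eq {H : Matrix m m ℂ} (hH : H.IsHermitian) {α : m → ℝ}
    (hα : ∀ r s, H r s ≠ 0 → α r ≠ α s) (δ : m → ℝ) :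
    ∃ X : Matrix m m ℂ, Xᴴ = -X ∧ ⁅X, diagonal fun r ↦ (α r : ℂ)⁆ = H ∧
      (trace (diagonal (fun r ↦ (δ r : ℂ)) * ⁅X, H⁆)).re =
        -∑ r, ∑ s, ‖H r s‖ ^ 2 * ((δ r - δ s) / (α r - α s)) := by
  refine ⟨of fun r s ↦ H r s / (α s - α r), ?_, ?_, ?_⟩
  · ext r s
    simp [hH.apply, ← div_neg]
  · ext r s
    rw [Ring.lie_def, Matrix.sub_apply, mul_diagonal, diagonal_mul, mul_comm, ← sub_mul]
    by_cases h : H r s = 0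
    · simp [h]
    · exact mul_div_cancel₀ _ (sub_ne_zero.2 (mod_cast (hα r s h).symm))
  · have hlie (r s) : ⁅H, diagonal fun r ↦ (δ r : ℂ)⁆ r s = H r s * (δ s - δ r) := by
      rw [Ring.lie_def, Matrix.sub_apply, mul_diagonal, diagonal_mul]
      ring
    rw [trace_mul_lie]
    simp only [trace, diag_apply, Matrix.mul_apply, of_apply, hlie, Complex.re_sum,
      ← Finset.sum_neg_distrib]
    refine Finset.sum_congr rfl fun r _ ↦ Finset.sum_congr rfl fun s _ ↦ ?_
    rw [← hH.apply s r]
    trans (((‖H r s‖ ^ 2 * ((δ s - δ r) / (α r - α s)) : ℝ) : ℂ)).re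
    · congr 1
      push_cast
      rw [← Complex.mul_conj', RCLike.star_def]
      ring
    · rw [Complex.ofReal_re, ← neg_sub (δ r), neg_div, mul_neg]

theorem HasMinimalSum.eq_zero_of_sum_conj_eq_zero {A H : ι → Matrix m m ℂ} {δ : m → ℝ}
    {R : ι → unitaryGroup m ℂ} {α : ι → m → ℝ} (hA : HasMinimalSum A)
    (hδ : ∑ i, A i = diagonal fun r ↦ (δ r : ℂ))
    (hR : ∀ i, Commute (diagonal fun r ↦ (δ r : ℂ)) (R i).1)
    (hAR : ∀ i, A i = (R i).1 * diagonal (fun r ↦ (α i r : ℂ)) * (R i).1ᴴ)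
    (hH : ∀ i, (H i).IsHermitian)
    (hpos : ∀ i r s, H i r s ≠ 0 → 0 < (δ r - δ s) / (α i r - α i s))
    (hsum : ∑ i, (R i).1 * H i * (R i).1ᴴ = 0) : H = 0 := by
  have hα (i r s) (h : H i r s ≠ 0) : α i r ≠ α i s := fun h' ↦ by
    simpa [h'] using hpos i r s h
  choose X hX hXα hXH using fun i ↦ exists_lie_diagonal_eq (hH i) (hα i) δ
  have hRR (i : ι) (B : Matrix m m ℂ) : (R i).1ᴴ * ((R i).1 * B) = B := by
    have : (R i).1ᴴ * (R i).1 = 1 := mem_unitaryGroup_iff'.1 (R i).2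
    rw [← Matrix.mul_assoc, this, Matrix.one_mul]
  have hlie (i : ι) (B C : Matrix m m ℂ) : ⁅(R i).1 * B * (R i).1ᴴ, (R i).1 * C * (R i).1ᴴ⁆ =
      (R i).1 * ⁅B, C⁆ * (R i).1ᴴ := by
    simp [Ring.lie_def, Matrix.mul_assoc, hRR, Matrix.mul_sub, Matrix.sub_mul]
  have hYA (i : ι) : ⁅(R i).1 * X i * (R i).1ᴴ, A i⁆ = (R i).1 * H i * (R i).1ᴴ := by
    rw [hAR, hlie, hXα]
  have hskew (i : ι) : ((R i).1 * X i * (R i).1ᴴ)ᴴ = -((R i).1 * X i * (R i).1ᴴ) := by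
    simp [hX, Matrix.mul_assoc]
  have htrace (i : ι) : trace (diagonal (fun r ↦ (δ r : ℂ)) * ((R i).1 * ⁅X i, H i⁆ * (R i).1ᴴ)) =
      trace (diagonal (fun r ↦ (δ r : ℂ)) * ⁅X i, H i⁆) := by
    rw [← Matrix.mul_assoc, ← Matrix.mul_assoc, (hR i).eq, trace_mul_comm, Matrix.mul_assoc, hRR]
  have hsecond := (hA.variations hskew).2 (by simp only [hYA, hsum])
  simp only [hYA, hlie, hδ, Matrix.mul_sum, trace_sum, htrace, Complex.re_sum, hXH,
    Finset.sum_neg_distrib, Left.nonneg_neg_iff] at hsecond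
  have hterm (i r s) : 0 ≤ ‖H i r s‖ ^ 2 * ((δ r - δ s) / (α i r - α i s)) := by
    by_cases h : H i r s = 0
    · simp [h]
    · exact mul_nonneg (by positivity) (hpos i r s h).le
  ext i r s
  by_contra h
  have hposterm := mul_pos (pow_pos (norm_pos_iff.2 h) 2) (hpos i r s h)
  refine hsecond.not_gt (Finset.sum_pos' ?_ ⟨i, Finset.mem_univ _, Finset.sum_pos' ?_
    ⟨r, Finset.mem_univ _, Finset.sum_pos' ?_ ⟨s, Finset.mem_univ _, hposterm⟩⟩⟩)
  · exact fun i _ ↦ Finset.sum_nonneg fun r _ ↦ Finset.sum_nonneg fun s _ ↦ hterm i r s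
  · exact fun r _ ↦ Finset.sum_nonneg fun s _ ↦ hterm i r s
  · exact fun s _ ↦ hterm i r s

end Hessian

section Separation

variable {ι p q : Type*} [Fintype ι] [Fintype p] [DecidableEq p] [Fintype q] [DecidableEq q]

theorem HasMinimalSum.eq_zero_of_sum_mul_eq_zero {A : ι → Matrix (p ⊕ q) (p ⊕ q) ℂ}
    {δ : p ⊕ q → ℝ} {R : ι → unitaryGroup (p ⊕ q) ℂ} {α : ι → p ⊕ q → ℝ}
    (hA : HasMinimalSum A) (hδ : ∑ i, A i = diagonal fun r ↦ (δ r : ℂ))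
    (hinl : ∀ x, 0 < δ (.inl x)) (hinr : ∀ y, δ (.inr y) ≤ 0)
    (hR : ∀ i, Commute (diagonal fun r ↦ (δ r : ℂ)) (R i).1)
    (hAR : ∀ i, A i = (R i).1 * diagonal (fun r ↦ (α i r : ℂ)) * (R i).1ᴴ)
    {Q : ι → Matrix p p ℂ} {P : ι → Matrix q q ℂ}
    (hblocks : ∀ i, (R i).1 = fromBlocks (Q i) 0 0 (P i)) {Z : ι → Matrix p q ℂ}
    (hZ : ∀ i y x, α i (.inl x) ≤ α i (.inr y) → (Z i * P i) x y = 0)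
    (hsum : ∑ i, Q i * Z i = 0) : Z = 0 := by
  have hP (i : ι) : P i * (P i)ᴴ = 1 := by
    have h : (R i).1 * (R i).1ᴴ = 1 := mem_unitaryGroup_iff.1 (R i).2
    rw [hblocks, fromBlocks_conjTranspose, fromBlocks_multiply, ← fromBlocks_one] at h
    simpa using (fromBlocks_inj.1 h).2.2.2
  let H (i : ι) : Matrix (p ⊕ q) (p ⊕ q) ℂ := fromBlocks 0 (Z i * P i) (Z i * P i)ᴴ 0
  have hconj (i : ι) : (R i).1 * H i * (R i).1ᴴ = fromBlocks 0 (Q i * Z i) (Q i * Z i)ᴴ 0 := by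
    have hPP (B : Matrix q p ℂ) : P i * ((P i)ᴴ * B) = B := by
      rw [← Matrix.mul_assoc, hP, Matrix.one_mul]
    simp [H, hblocks, fromBlocks_multiply, fromBlocks_conjTranspose, Matrix.mul_assoc, hP, hPP]
  have hH : H = 0 := by
    refine hA.eq_zero_of_sum_conj_eq_zero hδ hR hAR ?_ ?_ ?_
    · exact fun i ↦ by simp [H, IsHermitian, fromBlocks_conjTranspose]
    · rintro i (x | y) (x' | y') h
      · simp [H] at h
      · exact div_pos (by linarith [hinl x, hinr y'])
          (sub_pos.2 (not_le.1 fun h' ↦ h (hZ i y' x h')))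
      · refine div_pos_of_neg_of_neg (by linarith [hinl x', hinr y])
          (sub_neg.2 (not_le.1 fun h' ↦ h ?_))
        exact (congrArg star (hZ i y x' h')).trans (star_zero _)
      · simp [H] at h
    · have : ∑ i, (Q i * Z i)ᴴ = 0 := by rw [← conjTranspose_sum, hsum, conjTranspose_zero]
      simp only [hconj]
      ext (x | y) (x' | y')
      · simp [Matrix.sum_apply]
      · simpa [Matrix.sum_apply] using congrFun₂ hsum x y'
      · simpa [Matrix.sum_apply] using congrFun₂ this y x'
      · simp [Matrix.sum_apply]
  ext1 i
  have : Z i * P i = 0 := congrArg toBlocks₁₂ (congrFun hH i)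
  simpa [Matrix.mul_assoc, hP] using congrArg (· * (P i)ᴴ) this

theorem sum_conj_diagonal_apply_inl {R : unitaryGroup (p ⊕ q) ℂ} {Q : Matrix p p ℂ}
    {P : Matrix q q ℂ} (hR : R.1 = fromBlocks Q 0 0 P) (d : p ⊕ q → ℂ) :
    ∑ x, (R.1 * diagonal d * R.1ᴴ) (.inl x) (.inl x) = ∑ x, d (.inl x) := by
  have hQ : Q ∈ unitaryGroup p ℂ := by
    have h : R.1 * R.1ᴴ = 1 := mem_unitaryGroup_iff.1 R.2
    rw [hR, fromBlocks_conjTranspose, fromBlocks_multiply, ← fromBlocks_one] at h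
    exact mem_unitaryGroup_iff.2 (by simpa [star_eq_conjTranspose] using (fromBlocks_inj.1 h).1)
  have hd : diagonal d = fromBlocks (diagonal (d ∘ .inl)) 0 0 (diagonal (d ∘ .inr)) := by
    rw [fromBlocks_diagonal, Sum.elim_comp_inl_inr]
  calc ∑ x, (R.1 * diagonal d * R.1ᴴ) (.inl x) (.inl x)
      = trace (Q * diagonal (d ∘ .inl) * Qᴴ) := by
        rw [hR, hd]
        simp [fromBlocks_conjTranspose, fromBlocks_multiply, trace, -fromBlocks_diagonal]
    _ = ∑ x, d (.inl x) := by
        simp [trace_conj_of_mem_unitaryGroup hQ]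

theorem HasMinimalSum.exists_forall_le_re_trace {A : ι → Matrix (p ⊕ q) (p ⊕ q) ℂ}
    {δ : p ⊕ q → ℝ} (hA : HasMinimalSum A) (hherm : ∀ i, (A i).IsHermitian)
    (hδ : ∑ i, A i = diagonal fun r ↦ (δ r : ℂ))
    (hinl : ∀ x, 0 < δ (.inl x)) (hinr : ∀ y, δ (.inr y) ≤ 0) :
    ∃ t : ι → ℝ, ∑ i, t i = ∑ x, δ (.inl x) ∧ ∀ W : ι → unitaryGroup (p ⊕ q) ℂ,
      ∃ P : Matrix (p ⊕ q) (p ⊕ q) ℂ, ∀ i, t i ≤ (trace (P * ((W i).1 * A i * (W i).1ᴴ))).re := by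
  choose R α hR hAR using fun i ↦
    exists_unitary_commute_diagonal (hherm i) (hδ ▸ hA.commute hherm i)
  have hblocks (i : ι) :
      (R i).1 = fromBlocks (R i).1.toBlocks₁₁ 0 0 (R i).1.toBlocks₂₂ := by
    have hzero {r s} (h : δ r ≠ δ s) : (R i).1 r s = 0 :=
      commute_diagonal_iff.1 (hR i) r s (mod_cast h)
    have hlt (x y) : δ (.inr y) < δ (.inl x) := (hinr y).trans_lt (hinl x)
    ext (x | y) (x' | y')
    exacts [rfl, hzero (hlt x y').ne', hzero (hlt x' y).ne, rfl]
  refine ⟨fun i ↦ ∑ x, α i (.inl x), ?_, fun W ↦ ?_⟩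
  · have htrace : ∑ i, ∑ x, A i (.inl x) (.inl x) = ∑ x, (δ (.inl x) : ℂ) := by
      simp_rw [Finset.sum_comm (s := .univ (α := ι)), ← Matrix.sum_apply, hδ, diagonal_apply_eq]
    simp_rw [hAR, sum_conj_diagonal_apply_inl (hblocks _)] at htrace
    simpa using congrArg Complex.re htrace
  · obtain ⟨P, hP⟩ := (schubertMeet_of_transversal (fun Z hZ hsum ↦
      hA.eq_zero_of_sum_mul_eq_zero hδ hinl hinr hR hAR hblocks hZ hsum)
      fun i ↦ (W i * R i).1).exists_sum_le_re_trace fun i ↦ mem_unitaryGroup_iff'.1 (W i * R i).2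
    refine ⟨P, fun i ↦ (hP i).trans_eq ?_⟩
    simp [hAR, Matrix.mul_assoc]

variable {m n : Type*} [Fintype m] [DecidableEq m] [Fintype n] [DecidableEq n]

theorem HasMinimalSum.submatrix {A : ι → Matrix m m ℂ} (hA : HasMinimalSum A) (f : n ≃ m) :
    HasMinimalSum fun i ↦ (A i).submatrix f f := by
  intro W
  have hconj (i : ι) : (W i).1 * (A i).submatrix f f * (W i).1ᴴ =
      ((W i).1.submatrix f.symm f.symm * A i *
        ((W i).1.submatrix f.symm f.symm)ᴴ).submatrix f f := by
    simp [← submatrix_mul_equiv _ _ _ f]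
  simp_rw [hconj, sum_submatrix, submatrix_mul_equiv, trace_submatrix_equiv]
  exact hA fun i ↦ ⟨_, submatrix_mem_unitaryGroup (W i).2 f.symm⟩

theorem HasMinimalSum.conj {A : ι → Matrix m m ℂ} (hA : HasMinimalSum A) (V : unitaryGroup m ℂ) :
    HasMinimalSum fun i ↦ V.1 * A i * V.1ᴴ := by
  have hV : V.1ᴴ * V.1 = 1 := mem_unitaryGroup_iff'.1 V.2
  have hmul (B : Matrix m m ℂ) : V.1 * B * V.1ᴴ * (V.1 * B * V.1ᴴ) = V.1 * (B * B) * V.1ᴴ := by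
    simp only [Matrix.mul_assoc, ← Matrix.mul_assoc V.1ᴴ V.1, hV, Matrix.one_mul]
  intro W
  have := hA fun i ↦ W i * V
  simp only [← Matrix.mul_sum, ← Matrix.sum_mul, hmul, trace_conj_of_mem_unitaryGroup V.2]
  simpa [Matrix.mul_assoc] using this

theorem exists_hasMinimalSum_sum_eq_diagonal {A : ι → Matrix m m ℂ}
    (hherm : ∀ i, (A i).IsHermitian) : ∃ (V : ι → unitaryGroup m ℂ) (δ : m → ℝ),
      HasMinimalSum (fun i ↦ (V i).1 * A i * (V i).1ᴴ) ∧
        ∑ i, (V i).1 * A i * (V i).1ᴴ = diagonal fun r ↦ (δ r : ℂ) := by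
  obtain ⟨V, hV⟩ := exists_hasMinimalSum A
  have hD : (∑ i, (V i).1 * A i * (V i).1ᴴ).IsHermitian :=
    isSelfAdjoint_sum _ fun i _ ↦ isHermitian_mul_mul_conjTranspose _ (hherm i)
  let E : unitaryGroup m ℂ := star hD.eigenvectorUnitary
  have hE (i : ι) : (E * V i).1 * A i * (E * V i).1ᴴ =
      E.1 * ((V i).1 * A i * (V i).1ᴴ) * E.1ᴴ := by
    simp [Matrix.mul_assoc]
  refine ⟨fun i ↦ E * V i, hD.eigenvalues, ?_, ?_⟩
  · simpa only [hE] using hV.conj E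
  · simp only [hE, ← Matrix.mul_sum, ← Matrix.sum_mul]
    simpa [E, ← star_eq_conjTranspose, Matrix.mul_sum, Matrix.sum_mul, Function.comp_def] using
      hD.conjStarAlgAut_star_eigenvectorUnitary

theorem exists_sum_conj_eq_zero_or_forall_le_re_trace {A : ι → Matrix m m ℂ}
    (hherm : ∀ i, (A i).IsHermitian) (htrace : ∑ i, trace (A i) = 0) :
    (∃ V : ι → unitaryGroup m ℂ, ∑ i, (V i).1 * A i * (V i).1ᴴ = 0) ∨
      ∃ t : ι → ℝ, 0 < ∑ i, t i ∧ ∀ W : ι → unitaryGroup m ℂ,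
        ∃ P : Matrix m m ℂ, ∀ i, t i ≤ (trace (P * ((W i).1 * A i * (W i).1ᴴ))).re := by
  obtain ⟨V, δ, hV, hδ⟩ := exists_hasMinimalSum_sum_eq_diagonal hherm
  by_cases hδ0 : δ = 0
  · exact .inl ⟨V, by simp [hδ, hδ0]⟩
  right
  let f : {r // 0 < δ r} ⊕ {r // ¬ 0 < δ r} ≃ m := Equiv.sumCompl _
  have hsum : ∑ i, ((V i).1 * A i * (V i).1ᴴ).submatrix f f = diagonal fun r ↦ (δ (f r) : ℂ) := by
    rw [sum_submatrix, hδ]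
    exact submatrix_diagonal_equiv _ f
  obtain ⟨t, ht, hsep⟩ := (hV.submatrix f).exists_forall_le_re_trace
    (fun i ↦ (isHermitian_mul_mul_conjTranspose _ (hherm i)).submatrix f) hsum
    (fun x ↦ x.2) (fun y ↦ not_lt.1 y.2)
  refine ⟨t, ht ▸ ?_, fun W ↦ ?_⟩
  · have hδsum : ∑ r, δ r = 0 := by
      have := congrArg trace hδ
      simp only [trace_sum, trace_conj_of_mem_unitaryGroup (V _).2, htrace, trace_diagonal] at this
      exact_mod_cast this.symm
    obtain ⟨r, -, hr⟩ := Finset.exists_pos_of_sum_zero_of_exists_nonzero δ hδsum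
      (by simpa [funext_iff] using hδ0)
    exact Finset.sum_pos (fun x _ ↦ x.2) ⟨⟨r, hr⟩, Finset.mem_univ _⟩
  · obtain ⟨P, hP⟩ := hsep fun i ↦
      ⟨((W i) * (V i)⁻¹).1.submatrix f f, submatrix_mem_unitaryGroup (W i * (V i)⁻¹).2 f⟩
    refine ⟨P.submatrix f.symm f.symm, fun i ↦ (hP i).trans_eq ?_⟩
    have hconj : (W i * (V i)⁻¹).1 * ((V i).1 * A i * (V i).1ᴴ) * (W i * (V i)⁻¹).1ᴴ =
        (W i).1 * A i * (W i).1ᴴ := by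
      conv_rhs => rw [← inv_mul_cancel_right (W i) (V i)]
      simp only [UnitaryGroup.mul_val, conjTranspose_mul, Matrix.mul_assoc]
    rw [conjTranspose_submatrix, submatrix_mul_equiv, submatrix_mul_equiv, hconj,
      ← trace_submatrix_equiv (P.submatrix _ _ * _) f,
      ← submatrix_mul_equiv (P.submatrix _ _) _ f f, submatrix_submatrix,
      Equiv.symm_comp_self, submatrix_id_id]

end Separation

section NullWeights

variable {ι m : Type*} [Fintype ι] [Fintype m] [DecidableEq m]

/-- The nonnegative weights `w` for which the matrices `w i • ρ i` have unitary conjugates with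
vanishing sum. -/
def nullWeights (ρ : ι → Matrix m m ℂ) : Set (ι → ℝ) :=
  {w | (∀ i, 0 ≤ w i) ∧
    ∃ V : ι → unitaryGroup m ℂ, ∑ i, (w i : ℂ) • ((V i).1 * ρ i * (V i).1ᴴ) = 0}

theorem sum_mul_trace_eq_zero_of_mem_nullWeights {ρ : ι → Matrix m m ℂ} {w : ι → ℝ}
    (hw : w ∈ nullWeights ρ) : ∑ i, (w i : ℂ) * trace (ρ i) = 0 := by
  obtain ⟨-, V, hV⟩ := hw
  simpa [trace_sum, trace_conj_of_mem_unitaryGroup (V _).2] using congrArg trace hV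

theorem sum_mul_div_nonpos_of_mem_nullWeights {ρ : ι → Matrix m m ℂ} {u w t : ι → ℝ}
    (hu : u ∈ nullWeights ρ) (hw : ∀ i, 0 ≤ w i) (huw : ∀ i, w i = 0 → u i = 0)
    (ht : ∀ W : ι → unitaryGroup m ℂ, ∃ P : Matrix m m ℂ, ∀ i,
      t i ≤ (trace (P * ((W i).1 * ((w i : ℂ) • ρ i) * (W i).1ᴴ))).re) :
    ∑ i, u i * (t i / w i) ≤ 0 := by
  obtain ⟨hu, V, hV⟩ := hu
  obtain ⟨P, hP⟩ := ht V
  calc ∑ i, u i * (t i / w i) ≤ ∑ i, u i * (trace (P * ((V i).1 * ρ i * (V i).1ᴴ))).re := by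
        refine Finset.sum_le_sum fun i _ ↦ ?_
        rcases eq_or_ne (w i) 0 with h | h
        · simp [huw i h]
        · refine mul_le_mul_of_nonneg_left ((div_le_iff₀' ((hw i).lt_of_ne' h)).2 ?_) (hu i)
          simpa using hP i
    _ = 0 := by simpa [Matrix.mul_sum, trace_sum] using congrArg (fun B ↦ (trace (P * B)).re) hV

theorem convex_nullWeights {ρ : ι → Matrix m m ℂ} (hρ : ∀ i, (ρ i).IsHermitian) :
    Convex ℝ (nullWeights ρ) := by
  refine convex_iff_forall_pos.2 fun u hu v hv a b ha hb _ ↦ ?_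
  set w : ι → ℝ := a • u + b • v with hw_def
  have hau (i : ι) : 0 ≤ a * u i := mul_nonneg ha.le (hu.1 i)
  have hbv (i : ι) : 0 ≤ b * v i := mul_nonneg hb.le (hv.1 i)
  have hw (i : ι) : 0 ≤ w i := add_nonneg (hau i) (hbv i)
  have htrace : ∑ i, trace ((w i : ℂ) • ρ i) = 0 := by
    have h : ∑ i, trace ((w i : ℂ) • ρ i) =
        a * ∑ i, (u i : ℂ) * trace (ρ i) + b * ∑ i, (v i : ℂ) * trace (ρ i) := by
      simp [hw_def, Finset.mul_sum, Finset.sum_add_distrib, add_mul, mul_assoc]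
    rw [h, sum_mul_trace_eq_zero_of_mem_nullWeights hu,
      sum_mul_trace_eq_zero_of_mem_nullWeights hv, mul_zero, mul_zero, add_zero]
  have hherm (i : ι) : ((w i : ℂ) • ρ i).IsHermitian := by
    simp [IsHermitian, (hρ i).eq]
  rcases exists_sum_conj_eq_zero_or_forall_le_re_trace hherm htrace with ⟨V, hV⟩ | ⟨t, ht, hsep⟩
  · exact ⟨hw, V, by simpa using hV⟩
  · have hzero (i : ι) (h : w i = 0) : u i = 0 ∧ v i = 0 := by
      simpa [ha.ne', hb.ne'] using (add_eq_zero_iff_of_nonneg (hau i) (hbv i)).1 h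
    have hu' := sum_mul_div_nonpos_of_mem_nullWeights hu hw (fun i h ↦ (hzero i h).1) hsep
    have hv' := sum_mul_div_nonpos_of_mem_nullWeights hv hw (fun i h ↦ (hzero i h).2) hsep
    have hle (i : ι) : t i ≤ w i * (t i / w i) := by
      rcases eq_or_ne (w i) 0 with h | h
      · obtain ⟨P, hP⟩ := hsep 1
        simpa [h] using hP i
      · rw [mul_div_cancel₀ _ h]
    refine absurd ht (not_lt.2 ?_)
    calc ∑ i, t i ≤ ∑ i, w i * (t i / w i) := Finset.sum_le_sum fun i _ ↦ hle i
      _ = a * ∑ i, u i * (t i / w i) + b * ∑ i, v i * (t i / w i) := by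
        simp [hw_def, Finset.mul_sum, Finset.sum_add_distrib, add_mul, mul_assoc]
      _ ≤ 0 := add_nonpos (mul_nonpos_of_nonneg_of_nonpos ha.le hu')
        (mul_nonpos_of_nonneg_of_nonpos hb.le hv')

end NullWeights

section MixtureWeights

variable {ι m : Type*} [Fintype ι] [Fintype m] [DecidableEq m]

/-- The nonnegative weights `w` for which `σ` is the combination, with weights `w`, of unitary
conjugates of the matrices `ρ i`. -/
def mixtureWeights (σ : Matrix m m ℂ) (ρ : ι → Matrix m m ℂ) : Set (ι → ℝ) :=
  {w | (∀ i, 0 ≤ w i) ∧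
    ∃ V : ι → unitaryGroup m ℂ, σ = ∑ i, (w i : ℂ) • ((V i).1 * ρ i * (V i).1ᴴ)}

theorem elim_mem_nullWeights_iff {σ : Matrix m m ℂ} {ρ : ι → Matrix m m ℂ} {w : ι → ℝ} :
    (fun o : Option ι ↦ o.elim 1 w) ∈ nullWeights (fun o : Option ι ↦ o.elim (-σ) ρ) ↔
      w ∈ mixtureWeights σ ρ := by
  simp only [nullWeights, mixtureWeights, Set.mem_ofPred_eq, Option.forall, Option.elim_none,
    Option.elim_some, zero_le_one, true_and, Fintype.sum_option, Complex.ofReal_one, one_smul,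
    Matrix.mul_neg, Matrix.neg_mul, neg_add_eq_zero]
  refine and_congr_right fun _ ↦ ⟨?_, ?_⟩
  · rintro ⟨V, hV⟩
    have h : (V none).1ᴴ * (V none).1 = 1 := mem_unitaryGroup_iff'.1 (V none).2
    have hmul (B : Matrix m m ℂ) : (V none).1ᴴ * ((V none).1 * B) = B := by
      rw [← Matrix.mul_assoc, h, Matrix.one_mul]
    refine ⟨fun i ↦ (V none)⁻¹ * V (some i), ?_⟩
    calc σ = (V none).1ᴴ * ((V none).1 * σ * (V none).1ᴴ) * (V none).1 := by
          simp [Matrix.mul_assoc, hmul, h]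
      _ = _ := by
          rw [hV]
          simp [Matrix.mul_sum, Matrix.sum_mul, Matrix.mul_assoc, ← star_eq_conjTranspose]
  · rintro ⟨V, hV⟩
    exact ⟨fun o ↦ o.elim 1 V, by simpa using hV⟩

theorem convex_mixtureWeights {σ : Matrix m m ℂ} {ρ : ι → Matrix m m ℂ}
    (hρ : ∀ i, (ρ i).IsHermitian) : Convex ℝ (mixtureWeights σ ρ) := by
  intro u hu v hv a b ha hb hab
  have hσ : σ.IsHermitian := by
    obtain ⟨-, V, rfl⟩ := hu
    exact isSelfAdjoint_sum _ fun i _ ↦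
      .smul (Complex.conj_ofReal _) (isHermitian_mul_mul_conjTranspose _ (hρ i))
  rw [← elim_mem_nullWeights_iff] at *
  have hherm (o : Option ι) : (o.elim (-σ) ρ).IsHermitian := by
    cases o with
    | none => exact hσ.neg
    | some i => exact hρ i
  convert convex_nullWeights hherm hu hv ha hb hab using 1
  ext (_ | i) <;> simp [hab]

theorem comp_equiv_mem_mixtureWeights {κ : Type*} [Fintype κ] {σ : Matrix m m ℂ}
    {ρ : ι → Matrix m m ℂ} {w : ι → ℝ} (hw : w ∈ mixtureWeights σ ρ) (e : κ ≃ ι) :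
    w ∘ e ∈ mixtureWeights σ (ρ ∘ e) := by
  obtain ⟨hw, V, rfl⟩ := hw
  exact ⟨fun i ↦ hw (e i), V ∘ e, (e.sum_comp _).symm⟩

end MixtureWeights

theorem const_mem_of_convex_of_forall_comp_addLeft_mem {G : Type*} [AddGroup G] [Fintype G]
    {s : Set (G → ℝ)} (hs : Convex ℝ s) {p : G → ℝ} (hp : ∀ g, p ∘ Equiv.addLeft g ∈ s) :
    (fun _ ↦ (Fintype.card G : ℝ)⁻¹ * ∑ g, p g) ∈ s := by
  convert hs.sum_mem (t := .univ) (w := fun _ ↦ (Fintype.card G : ℝ)⁻¹) ?_ ?_ (fun g _ ↦ hp g)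
    using 1
  · ext h
    rw [← Equiv.sum_comp (Equiv.addRight h)]
    simp [Finset.mul_sum]
  · simp
  · simp

theorem convex_combination_equal_weights {n N : ℕ}
    (ρ σ : Matrix (Fin n) (Fin n) ℂ) (hρ : ρ.IsHermitian) (hσ : σ.IsHermitian)
    (p : Fin N → ℝ) (hp : ∀ i, 0 ≤ p i) (hps : ∑ i, p i = 1)
    (U : Fin N → Matrix (Fin n) (Fin n) ℂ)
    (hU : ∀ i, U i ∈ Matrix.unitaryGroup (Fin n) ℂ)
    (hσeq : σ = ∑ i, (p i : ℂ) • (U i * ρ * (U i)ᴴ)) :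
    ∃ V : Fin N → Matrix (Fin n) (Fin n) ℂ,
      (∀ i, V i ∈ Matrix.unitaryGroup (Fin n) ℂ) ∧
      σ = ∑ i, ((N : ℂ))⁻¹ • (V i * ρ * (V i)ᴴ) := by
  have : NeZero N := ⟨by rintro rfl; simp at hps⟩
  have hmem : p ∈ mixtureWeights σ fun _ ↦ ρ := ⟨hp, fun i ↦ ⟨U i, hU i⟩, hσeq⟩
  obtain ⟨-, V, hV⟩ := const_mem_of_convex_of_forall_comp_addLeft_mem
    (convex_mixtureWeights fun _ ↦ hρ) fun g ↦
      comp_equiv_mem_mixtureWeights hmem (Equiv.addLeft g)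
  exact ⟨fun i ↦ (V i).1, fun i ↦ (V i).2, by simpa [hps] using hV⟩
end

section
/- Let $\lambda \in \mathbb{R}^6$ and $\tilde{\lambda} \in \mathbb{R}^3$ be nonincreasing vectors. There exists a Hermitian matrix $\rho_{AB}$ on $\mathbb{C}^3 \otimes \mathbb{C}^2$ with spectrum $\lambda$ such that $\rho_A = \mathrm{Tr}_B(\rho_{AB})$ has spectrum $\tilde{\lambda}$ if and only if the following hold: the trace condition $\tilde{\lambda}_1 + \tilde{\lambda}_2 + \tilde{\lambda}_3 = \lambda_1 + \lambda_2 + \lambda_3 + \lambda_4 + \lambda_5 + \lambda_6$, together with the four inequalities $\tilde{\lambda}_1 \leq \lambda_1 + \lambda_2$, $\tilde{\lambda}_3 \geq \lambda_5 + \lambda_6$, $\tilde{\lambda}_3 \leq \lambda_2 + \lambda_3$, and $\tilde{\lambda}_1 \geq \lambda_4 + \lambda_5$. -/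
open Matrix Polynomial

/-- `lam` is the vector of eigenvalues of `M` listed with multiplicity:
the characteristic polynomial of `M` is `∏ i (X - lam i)`. -/
def HasSpectrum {m : Type*} [Fintype m] [DecidableEq m] {N : ℕ}
    (M : Matrix m m ℂ) (lam : Fin N → ℝ) : Prop :=
  M.charpoly = ∏ i, (X - C (lam i : ℂ))

/-- The partial trace over the second factor:
`(Tr_B ρ)^{ik} = ∑_j ρ^{ij,kj}`. -/
noncomputable def partialTraceB {dA dB : ℕ}
    (ρ : Matrix (Fin dA × Fin dB) (Fin dA × Fin dB) ℂ) : Matrix (Fin dA) (Fin dA) ℂ :=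
  fun i k => ∑ j : Fin dB, ρ (i, j) (k, j)

/-!
The partial trace satisfies `⟪v, ρ_A v⟫ = ∑ j, ⟪v ⊗ e_j, ρ (v ⊗ e_j)⟫`, and for a unit vector `v`
the `v ⊗ e_j` are orthonormal. Testing on the extreme eigenvectors of `ρ_A`, Ky Fan's principle
bounds `λ̃₁` above by `λ₁ + λ₂` and `λ̃₃` below by `λ₅ + λ₆`. In `ℂ³` there is moreover a
unit vector `v` with both `v ⊗ e_j` orthogonal to the top (or bottom) eigenvector of `ρ`; testing
on it gives `λ̃₃ ≤ λ₂ + λ₃` (or `λ̃₁ ≥ λ₄ + λ₅`).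

Conversely, take `ρ` to be a direct sum of three real symmetric `2 × 2` blocks with spectra
`(λ₁, λ₄)`, `(λ₂, λ₅)`, `(λ₃, λ₆)`, so placed that their off-diagonal entries vanish in `ρ_A`. Then
`ρ_A` is diagonal, and the diagonals of the blocks can be chosen, within the bounds of the
`2 × 2` Schur–Horn theorem, to make its entries `λ̃`.
-/

open Finset Module

theorem exists_equiv_of_map_univ_val_eq {α β γ : Type*} [Fintype α] [Fintype β]
    {f : α → γ} {g : β → γ} (h : univ.val.map f = univ.val.map g) :
    ∃ e : α ≃ β, ∀ a, g (e a) = f a := by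
  classical
  have fiberEquiv (c : γ) : Nonempty ({a // f a = c} ≃ {b // g b = c}) := by
    refine ⟨Fintype.equivOfCardEq ?_⟩
    have hcount := congrArg (Multiset.count c) h
    rw [Multiset.count_map, Multiset.count_map] at hcount
    rw [Fintype.card_subtype, Fintype.card_subtype]
    simpa [Finset.card, Finset.filter, eq_comm] using hcount
  exact ⟨.ofFiberEquiv fun c => (fiberEquiv c).some, Equiv.ofFiberEquiv_map _⟩

theorem sum_mul_le_sum_of_sum_eq_card {ι : Type*} [Fintype ι] {lam w : ι → ℝ}
    {S : Finset ι} (hw₀ : ∀ i, 0 ≤ w i) (hw₁ : ∀ i, w i ≤ 1) (hw : ∑ i, w i = #S)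
    (hS : ∀ i ∈ S, ∀ k ∉ S, w k ≠ 0 → lam k ≤ lam i) :
    ∑ i, lam i * w i ≤ ∑ i ∈ S, lam i := by
  classical
  rcases S.eq_empty_or_nonempty with rfl | hne
  · have hw_zero : ∀ i, w i = 0 := by simpa [sum_eq_zero_iff_of_nonneg, hw₀] using hw
    simp [hw_zero]
  obtain ⟨i₀, hi₀, hmin⟩ := S.exists_min_image lam hne
  have hterm (i : ι) :
      lam i * w i ≤ (if i ∈ S then lam i - lam i₀ else 0) + lam i₀ * w i := by
    split_ifs with hi
    · nlinarith [hmin i hi, hw₁ i]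
    · rcases eq_or_ne (w i) 0 with hwi | hwi
      · simp [hwi]
      · nlinarith [hS i₀ hi₀ i hi hwi, hw₀ i]
  calc ∑ i, lam i * w i
      ≤ ∑ i, ((if i ∈ S then lam i - lam i₀ else 0) + lam i₀ * w i) :=
        sum_le_sum fun i _ => hterm i
    _ = ∑ i ∈ S, lam i := by
        rw [sum_add_distrib, ← mul_sum, hw, ← sum_filter, filter_mem_eq_inter, univ_inter,
          sum_sub_distrib, sum_const, nsmul_eq_mul]
        ring

section Eigenbasis

variable {𝕜 E ι : Type*} [RCLike 𝕜] [NormedAddCommGroup E] [InnerProductSpace 𝕜 E] [Fintype ι]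

theorem exists_norm_eq_one_forall_inner_eq_zero [FiniteDimensional 𝕜 E] (x : ι → E)
    (h : Fintype.card ι < finrank 𝕜 E) :
    ∃ v : E, ‖v‖ = 1 ∧ ∀ i, inner 𝕜 (x i) v = 0 := by
  let f : E →ₗ[𝕜] ι → 𝕜 := LinearMap.pi fun i => innerₛₗ 𝕜 (x i)
  obtain ⟨v, hv, hv_ne⟩ := (Submodule.ne_bot_iff _).1
    (f.ker_ne_bot_of_finrank_lt (by rwa [finrank_fintype_fun_eq_card]))
  have hperp (i : ι) : inner 𝕜 (x i) v = 0 := congrFun (LinearMap.mem_ker.1 hv) i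
  exact ⟨(‖v‖⁻¹ : 𝕜) • v, norm_smul_inv_norm hv_ne, fun i => by
    rw [inner_smul_right, hperp, mul_zero]⟩

/-- `b` is an orthonormal eigenbasis of `T` with real eigenvalues `lam`, on which the extremal
estimates for `T` are tested. The eigenvalues need not be ordered. -/
def IsEigenbasis (T : E →ₗ[𝕜] E) (lam : ι → ℝ) (b : OrthonormalBasis ι 𝕜 E) : Prop :=
  ∀ i, T (b i) = (lam i : 𝕜) • b i

namespace IsEigenbasis

variable {T : E →ₗ[𝕜] E} {lam : ι → ℝ} {b : OrthonormalBasis ι 𝕜 E}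

theorem neg (hb : IsEigenbasis T lam b) : IsEigenbasis (-T) (-lam) b := fun i => by
  simp [hb i]

theorem re_inner_map_self (hb : IsEigenbasis T lam b) (v : E) :
    RCLike.re (inner 𝕜 v (T v)) = ∑ i, lam i * ‖inner 𝕜 (b i) v‖ ^ 2 := by
  have hTv : T v = ∑ i, (inner 𝕜 (b i) v * lam i) • b i := by
    conv_lhs => rw [← b.sum_repr' v]
    simp [hb _, smul_smul]
  rw [hTv, inner_sum, map_sum]
  refine sum_congr rfl fun i _ => ?_
  rw [inner_smul_right, mul_right_comm, RCLike.re_mul_ofReal, mul_comm, inner_mul_symm_re_eq_norm,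
    norm_mul, norm_inner_symm v, sq]

theorem le_re_inner_map_self (hb : IsEigenbasis T lam b) {t : ℝ} {v : E} (hv : ‖v‖ = 1)
    (h : ∀ i, inner 𝕜 (b i) v ≠ 0 → t ≤ lam i) : t ≤ RCLike.re (inner 𝕜 v (T v)) := by
  calc t = ∑ i, t * ‖inner 𝕜 (b i) v‖ ^ 2 := by
        rw [← mul_sum, b.sum_sq_norm_inner_right, hv, one_pow, mul_one]
    _ ≤ ∑ i, lam i * ‖inner 𝕜 (b i) v‖ ^ 2 := by
        refine sum_le_sum fun i _ => ?_
        by_cases hi : inner 𝕜 (b i) v = 0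
        · simp [hi]
        · gcongr
          exact h i hi
    _ = RCLike.re (inner 𝕜 v (T v)) := (hb.re_inner_map_self v).symm

/-- Ky Fan's maximum principle on the orthogonal complement of the `b i`, `i ∈ K`. -/
theorem sum_re_inner_map_self_le {J : Type*} [Fintype J]
    (hb : IsEigenbasis T lam b) {u : J → E} (hu : Orthonormal 𝕜 u) {S K : Finset ι}
    (hS : #S = Fintype.card J) (hK : ∀ i ∈ K, ∀ j, inner 𝕜 (b i) (u j) = 0)
    (hSK : ∀ i ∈ S, ∀ k ∉ S, k ∉ K → lam k ≤ lam i) :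
    ∑ j, RCLike.re (inner 𝕜 (u j) (T (u j))) ≤ ∑ i ∈ S, lam i := by
  let w (i : ι) : ℝ := ∑ j, ‖inner 𝕜 (b i) (u j)‖ ^ 2
  have hw₁ (i : ι) : w i ≤ 1 := by
    simpa [w, b.norm_eq_one i, norm_inner_symm (b i)] using
      hu.sum_inner_products_le (x := b i) (s := univ)
  have hw_sum : ∑ i, w i = #S := by
    simp [w, sum_comm (s := univ (α := ι)), b.sum_sq_norm_inner_right, hu.norm_eq_one, hS]
  calc ∑ j, RCLike.re (inner 𝕜 (u j) (T (u j)))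
      = ∑ i, lam i * w i := by
        simp only [hb.re_inner_map_self, w, mul_sum]
        exact sum_comm
    _ ≤ ∑ i ∈ S, lam i := by
        refine sum_mul_le_sum_of_sum_eq_card (fun i => by positivity) hw₁ hw_sum
          fun i hi k hkS hwk => hSK i hi k hkS fun hkK => hwk ?_
        simp [w, hK k hkK]

end IsEigenbasis

end Eigenbasis

namespace HasSpectrum

variable {n : Type*} [Fintype n] [DecidableEq n] {N : ℕ} {M : Matrix n n ℂ} {lam : Fin N → ℝ}

theorem roots_charpoly (h : HasSpectrum M lam) :
    M.charpoly.roots = univ.val.map fun i => (lam i : ℂ) := by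
  rw [h, roots_prod _ _ (prod_ne_zero_iff.2 fun i _ => X_sub_C_ne_zero _)]
  simp

theorem trace_eq (h : HasSpectrum M lam) : M.trace = (∑ i, lam i : ℝ) := by
  rw [trace_eq_sum_roots_charpoly, h.roots_charpoly, Complex.ofReal_sum]
  rfl

theorem exists_isEigenbasis (h : HasSpectrum M lam) (hM : M.IsHermitian) :
    ∃ b, IsEigenbasis (toEuclideanLin M) lam b := by
  obtain ⟨e, he⟩ := exists_equiv_of_map_univ_val_eq
    (h.roots_charpoly.symm.trans hM.roots_charpoly_eq_eigenvalues)
  refine ⟨hM.eigenvectorBasis.reindex e.symm, fun i => ?_⟩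
  have heig : hM.eigenvalues (e i) = lam i := by simpa using he i
  have hvec := hM.mulVec_eigenvectorBasis (e i)
  rw [heig] at hvec
  ext k
  simpa [toLpLin_apply] using congrFun hvec k

end HasSpectrum

section PartialTrace

variable {dA dB : ℕ} {ρ : Matrix (Fin dA × Fin dB) (Fin dA × Fin dB) ℂ}

theorem isHermitian_partialTraceB (hρ : ρ.IsHermitian) : (partialTraceB ρ).IsHermitian := by
  ext i k
  simp only [conjTranspose_apply, partialTraceB, star_sum]
  exact sum_congr rfl fun j _ => hρ.apply _ _

theorem trace_partialTraceB : (partialTraceB ρ).trace = ρ.trace := by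
  simp [trace, partialTraceB, Fintype.sum_prod_type]

theorem partialTraceB_neg : partialTraceB (-ρ) = -partialTraceB ρ := by
  ext
  simp [partialTraceB]

/-- The map `v ↦ v ⊗ e_j` used to express `partialTraceB ρ` through `ρ`. The tensor product is
modelled by functions on pairs of indices. -/
noncomputable def tmulBasis (j : Fin dB) :
    EuclideanSpace ℂ (Fin dA) →ₗ[ℂ] EuclideanSpace ℂ (Fin dA × Fin dB) where
  toFun v := WithLp.toLp 2 fun p => if p.2 = j then v p.1 else 0
  map_add' v w := by ext p; by_cases h : p.2 = j <;> simp [h]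
  map_smul' a v := by ext p; simp

theorem inner_tmulBasis_left (v : EuclideanSpace ℂ (Fin dA)) (j : Fin dB)
    (φ : EuclideanSpace ℂ (Fin dA × Fin dB)) :
    inner ℂ (tmulBasis j v) φ = ∑ a, φ (a, j) * star (v a) := by
  simp [tmulBasis, PiLp.inner_apply, Fintype.sum_prod_type, apply_ite]

theorem inner_tmulBasis_tmulBasis (v w : EuclideanSpace ℂ (Fin dA)) (j k : Fin dB) :
    inner ℂ (tmulBasis j v) (tmulBasis k w) = if j = k then inner ℂ v w else 0 := by
  rw [inner_tmulBasis_left]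
  by_cases h : j = k <;> simp [tmulBasis, PiLp.inner_apply, h]

theorem orthonormal_tmulBasis {v : EuclideanSpace ℂ (Fin dA)} (hv : ‖v‖ = 1) :
    Orthonormal ℂ fun j : Fin dB => tmulBasis j v := by
  rw [orthonormal_iff_ite]
  intro j k
  rw [inner_tmulBasis_tmulBasis, inner_self_eq_norm_sq_to_K, hv]
  simp

theorem inner_partialTraceB (v : EuclideanSpace ℂ (Fin dA)) :
    inner ℂ v (toEuclideanLin (partialTraceB ρ) v) =
      ∑ j, inner ℂ (tmulBasis j v) (toEuclideanLin ρ (tmulBasis j v)) := by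
  simp only [inner_tmulBasis_left]
  rw [sum_comm]
  simp only [tmulBasis, LinearMap.coe_mk, AddHom.coe_mk, toLpLin_apply, PiLp.inner_apply,
    RCLike.inner_apply, mulVec, dotProduct, partialTraceB, mul_ite, mul_zero,
    Fintype.sum_prod_type, sum_ite_eq', mem_univ, ↓reduceIte, RCLike.star_def]
  refine sum_congr rfl fun i _ => ?_
  simp only [sum_mul]
  exact sum_comm

variable {ι κ : Type*} [Fintype ι] [Fintype κ]
  {lam : ι → ℝ} {b : OrthonormalBasis ι ℂ (EuclideanSpace ℂ (Fin dA × Fin dB))}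
  {tlam : κ → ℝ} {c : OrthonormalBasis κ ℂ (EuclideanSpace ℂ (Fin dA))}

/-- Since `dB * #K < #U`, some unit vector `v` in the span of the `c i`, `i ∈ U`, has all `v ⊗ e_j`
orthogonal to the `b i`, `i ∈ K`. -/
theorem le_sum_of_isEigenbasis_partialTraceB (hb : IsEigenbasis (toEuclideanLin ρ) lam b)
    (hc : IsEigenbasis (toEuclideanLin (partialTraceB ρ)) tlam c) {t : ℝ} {S K : Finset ι}
    {U : Finset κ} (hU : ∀ i ∈ U, t ≤ tlam i) (hKU : dB * #K < #U) (hS : #S = dB)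
    (hSK : ∀ i ∈ S, ∀ k ∉ S, k ∉ K → lam k ≤ lam i) : t ≤ ∑ i ∈ S, lam i := by
  classical
  obtain ⟨v, hv, hperp⟩ := exists_norm_eq_one_forall_inner_eq_zero (𝕜 := ℂ)
    (Sum.elim (fun i : (Uᶜ : Finset κ) => c i)
      fun p : K × Fin dB => (tmulBasis p.2).adjoint (b p.1)) (by
    have hκ : Fintype.card κ = dA := by simpa using (finrank_eq_card_basis c.toBasis).symm
    have hUκ := U.card_le_univ
    rw [Fintype.card_sum, Fintype.card_prod, Fintype.card_coe, Fintype.card_coe, Fintype.card_fin,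
      card_compl, hκ, finrank_euclideanSpace_fin, mul_comm]
    omega)
  have hvU (i : κ) (hi : inner ℂ (c i) v ≠ 0) : i ∈ U := by
    by_contra hiU
    exact hi (hperp (.inl ⟨i, mem_compl.2 hiU⟩))
  have hvK (i : ι) (hi : i ∈ K) (j : Fin dB) : inner ℂ (b i) (tmulBasis j v) = 0 := by
    rw [← LinearMap.adjoint_inner_left]
    exact hperp (.inr (⟨i, hi⟩, j))
  calc t ≤ RCLike.re (inner ℂ v (toEuclideanLin (partialTraceB ρ) v)) :=
        hc.le_re_inner_map_self hv fun i hi => hU i (hvU i hi)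
    _ = ∑ j, RCLike.re (inner ℂ (tmulBasis j v) (toEuclideanLin ρ (tmulBasis j v))) := by
        rw [inner_partialTraceB, map_sum]
    _ ≤ ∑ i ∈ S, lam i :=
        hb.sum_re_inner_map_self_le (orthonormal_tmulBasis hv) (by simpa using hS) hvK hSK

theorem sum_le_of_isEigenbasis_partialTraceB (hb : IsEigenbasis (toEuclideanLin ρ) lam b)
    (hc : IsEigenbasis (toEuclideanLin (partialTraceB ρ)) tlam c) {t : ℝ} {S K : Finset ι}
    {U : Finset κ} (hU : ∀ i ∈ U, tlam i ≤ t) (hKU : dB * #K < #U) (hS : #S = dB)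
    (hSK : ∀ i ∈ S, ∀ k ∉ S, k ∉ K → lam i ≤ lam k) : ∑ i ∈ S, lam i ≤ t := by
  have hb' : IsEigenbasis (toEuclideanLin (-ρ)) (-lam) b := by simpa using hb.neg
  have hc' : IsEigenbasis (toEuclideanLin (partialTraceB (-ρ))) (-tlam) c := by
    simpa [partialTraceB_neg] using hc.neg
  have hneg := le_sum_of_isEigenbasis_partialTraceB hb' hc' (t := -t)
    (fun i hi => neg_le_neg (hU i hi)) hKU hS fun i hi k hkS hkK => neg_le_neg (hSK i hi k hkS hkK)
  simpa using hneg

end PartialTrace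

theorem exists_isHermitian_fin_two {p q x : ℝ} (hq : q ≤ x) (hp : x ≤ p) :
    ∃ M : Matrix (Fin 2) (Fin 2) ℂ, M.IsHermitian ∧
      M.charpoly = (X - C (p : ℂ)) * (X - C (q : ℂ)) ∧
      M 0 0 = x ∧ M 1 1 = (p + q - x : ℝ) := by
  have hsqrt : (√((p - x) * (x - q)) : ℂ) * √((p - x) * (x - q)) = (p - x) * (x - q) := by
    rw [← Complex.ofReal_mul,
      Real.mul_self_sqrt (mul_nonneg (sub_nonneg.2 hp) (sub_nonneg.2 hq))]
    push_cast
    rfl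
  refine ⟨!![(x : ℂ), √((p - x) * (x - q)); √((p - x) * (x - q)), (p + q - x : ℝ)],
    ?_, ?_, rfl, rfl⟩
  · ext i j
    fin_cases i <;> fin_cases j <;> simp
  · rw [charpoly_fin_two, trace_fin_two_of, det_fin_two_of, hsqrt]
    push_cast
    simp only [map_add, map_sub, map_mul]
    ring

section BlockDiagonal

variable {m o R : Type*} [Fintype m] [DecidableEq m] [Fintype o] [DecidableEq o]
  [CommRing R]

theorem charmatrix_blockDiagonal (M : o → Matrix m m R) :
    (blockDiagonal M).charmatrix = blockDiagonal fun k => (M k).charmatrix := by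
  ext ⟨i, k⟩ ⟨j, l⟩
  by_cases h : k = l <;> simp [charmatrix_apply, blockDiagonal_apply, diagonal_apply, h]

theorem charpoly_blockDiagonal (M : o → Matrix m m R) :
    (blockDiagonal M).charpoly = ∏ k, (M k).charpoly := by
  simp only [Matrix.charpoly, charmatrix_blockDiagonal, det_blockDiagonal]

end BlockDiagonal

section Pairing

variable {dA dB : ℕ}

/-- The relabelling `(j, k) ↦ (σ_j k, j)`, under which the `j`-th basis vector of the `k`-th
block becomes `e_{σ_j k} ⊗ e_j`; it carries `blockDiagonal`, whose block index comes second, to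
matrices on `ℂ^dA ⊗ ℂ^dB`. -/
def blockShear (σ : Fin dB → Equiv.Perm (Fin dA)) : Fin dB × Fin dA ≃ Fin dA × Fin dB :=
  (Equiv.prodShear (.refl _) σ).trans (.prodComm _ _)

/-- Distinct basis vectors of one block differ in the second factor, so the off-diagonal entries of
the blocks are traced out. -/
theorem partialTraceB_reindex_blockDiagonal (σ : Fin dB → Equiv.Perm (Fin dA))
    (M : Fin dA → Matrix (Fin dB) (Fin dB) ℂ) :
    partialTraceB (reindex (blockShear σ) (blockShear σ) (blockDiagonal M)) =
      diagonal fun i => ∑ j, M ((σ j).symm i) j j := by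
  ext i k
  by_cases h : i = k <;>
    simp [partialTraceB, blockShear, blockDiagonal_apply, h]

theorem exists_isHermitian_partialTraceB_eq_diagonal {p q x : Fin dA → ℝ} (hq : q ≤ x)
    (hp : x ≤ p) (σ τ : Equiv.Perm (Fin dA)) :
    ∃ ρ : Matrix (Fin dA × Fin 2) (Fin dA × Fin 2) ℂ, ρ.IsHermitian ∧
      ρ.charpoly = ∏ k, (X - C (p k : ℂ)) * (X - C (q k : ℂ)) ∧
      partialTraceB ρ = diagonal fun i => ((x (σ.symm i) + (p + q - x) (τ.symm i) : ℝ) : ℂ) := by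
  choose M hM hchar h₀ h₁ using fun k => exists_isHermitian_fin_two (hq k) (hp k)
  refine ⟨reindex (blockShear ![σ, τ]) (blockShear ![σ, τ]) (blockDiagonal M),
    (isHermitian_blockDiagonal_iff.2 hM).reindex _, ?_, ?_⟩
  · rw [charpoly_reindex, charpoly_blockDiagonal]
    exact prod_congr rfl fun k _ => hchar k
  · rw [partialTraceB_reindex_blockDiagonal]
    simp [h₀, h₁]

end Pairing

section ThreeByTwo

variable {lam : Fin 6 → ℝ} {tlam : Fin 3 → ℝ}

/-- The relabelling by `swap 1 2` and `swap 0 1` puts the blocks with spectra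
`(lam k, lam (k + 3))`, `k = 0, 1, 2`, on the pairs of levels `{0, 1}`, `{0, 2}`, `{1, 2}` of the
first factor. -/
theorem exists_isHermitian_hasSpectrum_of_mem_Icc {x : Fin 3 → ℝ}
    (hx : x ∈ Set.Icc ![lam 3, lam 4, lam 5] ![lam 0, lam 1, lam 2])
    (h₀ : tlam 0 = x 0 + (lam 1 + lam 4 - x 1)) (h₁ : tlam 1 = x 2 + (lam 0 + lam 3 - x 0))
    (h₂ : tlam 2 = x 1 + (lam 2 + lam 5 - x 2)) :
    ∃ ρAB : Matrix (Fin 3 × Fin 2) (Fin 3 × Fin 2) ℂ,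
      ρAB.IsHermitian ∧ HasSpectrum ρAB lam ∧ HasSpectrum (partialTraceB ρAB) tlam := by
  obtain ⟨ρ, hρ, hchar, hdiag⟩ :=
    exists_isHermitian_partialTraceB_eq_diagonal hx.1 hx.2 (.swap 1 2) (.swap 0 1)
  refine ⟨ρ, hρ, ?_, ?_⟩
  · rw [HasSpectrum, hchar, Fin.prod_univ_three, Fin.prod_univ_six]
    simp only [Matrix.cons_val]
    ring
  · have htlam : partialTraceB ρ = diagonal fun i => (tlam i : ℂ) := by
      rw [hdiag]
      congr 1
      funext i
      fin_cases i <;> simp [h₀, h₁, h₂, Equiv.swap_apply_of_ne_of_ne]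
    rw [HasSpectrum, htlam, charpoly_diagonal]

theorem exists_mem_Icc_tlam_eq (hlam : Antitone lam) (htlam : Antitone tlam)
    (htrace : tlam 0 + tlam 1 + tlam 2 = lam 0 + lam 1 + lam 2 + lam 3 + lam 4 + lam 5)
    (h₁ : tlam 0 ≤ lam 0 + lam 1) (h₂ : lam 4 + lam 5 ≤ tlam 2)
    (h₃ : tlam 2 ≤ lam 1 + lam 2) (h₄ : lam 3 + lam 4 ≤ tlam 0) :
    ∃ x : Fin 3 → ℝ, x ∈ Set.Icc ![lam 3, lam 4, lam 5] ![lam 0, lam 1, lam 2] ∧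
      tlam 0 = x 0 + (lam 1 + lam 4 - x 1) ∧ tlam 1 = x 2 + (lam 0 + lam 3 - x 0) ∧
      tlam 2 = x 1 + (lam 2 + lam 5 - x 2) := by
  have l01 : lam 1 ≤ lam 0 := hlam (by decide)
  have l12 : lam 2 ≤ lam 1 := hlam (by decide)
  have l23 : lam 3 ≤ lam 2 := hlam (by decide)
  have l34 : lam 4 ≤ lam 3 := hlam (by decide)
  have l45 : lam 5 ≤ lam 4 := hlam (by decide)
  have t01 : tlam 1 ≤ tlam 0 := htlam (by decide)
  have t12 : tlam 2 ≤ tlam 1 := htlam (by decide)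
  -- The equations leave one free parameter `a = x 0`, which `x ∈ Set.Icc _ _` confines to an
  -- intersection of three intervals.
  obtain ⟨a, ⟨l₀, l₁, l₂⟩, u₀, u₁, u₂⟩ : ∃ a : ℝ,
      (lam 3 ≤ a ∧ tlam 0 - lam 1 ≤ a ∧ lam 0 + lam 3 + lam 5 - tlam 1 ≤ a) ∧
      (a ≤ lam 0 ∧ a ≤ tlam 0 - lam 4 ∧ a ≤ lam 0 + lam 3 + lam 2 - tlam 1) := by
    refine ⟨max (lam 3) (max (tlam 0 - lam 1) (lam 0 + lam 3 + lam 5 - tlam 1)), by simp, ?_⟩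
    simp only [max_le_iff]
    refine ⟨⟨?_, ?_, ?_⟩, ⟨?_, ?_, ?_⟩, ⟨?_, ?_, ?_⟩⟩ <;> linarith
  refine ⟨![a, a + lam 1 + lam 4 - tlam 0, a + tlam 1 - lam 0 - lam 3],
    ⟨fun k => ?_, fun k => ?_⟩, ?_, ?_, ?_⟩
  · fin_cases k <;> simp only [Fin.mk_one, Fin.zero_eta, Fin.reduceFinMk, Matrix.cons_val] <;>
      linarith
  · fin_cases k <;> simp only [Fin.mk_one, Fin.zero_eta, Fin.reduceFinMk, Matrix.cons_val] <;>
      linarith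
  all_goals simp only [Matrix.cons_val]; linarith

end ThreeByTwo

/-- The complete solution of the partial trace problem for `d_A = 3`, `d_B = 2`:
nonincreasing `λ ∈ ℝ⁶` and `λ̃ ∈ ℝ³` arise as the spectra of a Hermitian `ρ_{AB}` on
`ℂ³ ⊗ ℂ²` and of its partial trace `ρ_A` iff the trace condition and the four listed
inequalities hold. -/
theorem dim3x2_characterization
    (lam : Fin 6 → ℝ) (hlam : Antitone lam)
    (tlam : Fin 3 → ℝ) (htlam : Antitone tlam) :
    (∃ ρAB : Matrix (Fin 3 × Fin 2) (Fin 3 × Fin 2) ℂ,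
        ρAB.IsHermitian ∧ HasSpectrum ρAB lam ∧ HasSpectrum (partialTraceB ρAB) tlam) ↔
      (tlam 0 + tlam 1 + tlam 2 = lam 0 + lam 1 + lam 2 + lam 3 + lam 4 + lam 5 ∧
        tlam 0 ≤ lam 0 + lam 1 ∧
        lam 4 + lam 5 ≤ tlam 2 ∧
        tlam 2 ≤ lam 1 + lam 2 ∧
        lam 3 + lam 4 ≤ tlam 0) := by
  constructor
  · rintro ⟨ρ, hρ, hlamρ, htlamρ⟩
    obtain ⟨b, hb⟩ := hlamρ.exists_isEigenbasis hρ
    obtain ⟨c, hc⟩ := htlamρ.exists_isEigenbasis (isHermitian_partialTraceB hρ)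
    refine ⟨?_, ?_, ?_, ?_, ?_⟩
    · have htrace := trace_partialTraceB (ρ := ρ)
      rw [hlamρ.trace_eq, htlamρ.trace_eq, Complex.ofReal_inj] at htrace
      simpa [Fin.sum_univ_succ, add_assoc] using htrace
    · simpa using le_sum_of_isEigenbasis_partialTraceB hb hc (S := {0, 1}) (K := ∅) (U := {0})
        (t := tlam 0) (by simp) (by decide) rfl fun i hi k hkS hkK => hlam (by revert i k; decide)
    · simpa using sum_le_of_isEigenbasis_partialTraceB hb hc (S := {4, 5}) (K := ∅) (U := {2})
        (t := tlam 2) (by simp) (by decide) rfl fun i hi k hkS hkK => hlam (by revert i k; decide)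
    · simpa using le_sum_of_isEigenbasis_partialTraceB hb hc (S := {1, 2}) (K := {0}) (U := univ)
        (fun i _ => htlam (Fin.le_last i)) (by decide) rfl
        fun i hi k hkS hkK => hlam (by revert i k; decide)
    · simpa using sum_le_of_isEigenbasis_partialTraceB hb hc (S := {3, 4}) (K := {5}) (U := univ)
        (fun i _ => htlam (Fin.zero_le i)) (by decide) rfl
        fun i hi k hkS hkK => hlam (by revert i k; decide)
  · rintro ⟨htrace, h₁, h₂, h₃, h₄⟩
    obtain ⟨x, hx, hx₀, hx₁, hx₂⟩ := exists_mem_Icc_tlam_eq hlam htlam htrace h₁ h₂ h₃ h₄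
    exact exists_isHermitian_hasSpectrum_of_mem_Icc hx hx₀ hx₁ hx₂
end

section
/- Let $d_A, d_B$ be positive integers with $d_B \geq \tfrac{1}{2} d_A^2$. Let $\lambda \in \mathbb{R}^{d_A d_B}$ and $\tilde{\lambda} \in \mathbb{R}^{d_A}$ be nonincreasing vectors satisfying the basic inequalities $\sum_{i=1}^{k} \tilde{\lambda}_i \leq \sum_{i=1}^{d_B k} \lambda_i$ for all $k \in \{1, \ldots, d_A - 1\}$ and the trace condition $\sum_{i=1}^{d_A} \tilde{\lambda}_i = \sum_{i=1}^{d_A d_B} \lambda_i$. Then there exists a Hermitian matrix $\rho_{AB}$ on $\mathbb{C}^{d_A} \otimes \mathbb{C}^{d_B}$ with spectrum $\lambda$ whose partial trace $\rho_A = \mathrm{Tr}_B(\rho_{AB})$ has spectrum $\tilde{\lambda}$; that is, when $d_B \geq \tfrac{1}{2} d_A^2$ the basic inequalities are sufficient to characterize the relationship between the spectrum of $\rho_{AB}$ and the spectrum of $\rho_A$. -/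
open Matrix Polynomial

/-- Partial sum of the first `k` entries of a vector indexed by `Fin N`. -/
noncomputable def psum {N : ℕ} (v : Fin N → ℝ) (k : ℕ) : ℝ :=
  ∑ i ∈ Finset.univ.filter (fun i : Fin N => (i : ℕ) < k), v i

/-!
Cut `λ` into `d_A` consecutive blocks of length `d_B`. The basic inequalities say that the vector
`μ` of block sums majorizes `λ̃`, so by Horn's theorem some orthogonal `O` makes `λ̃` the diagonal
of `O diag(μ) Oᵀ`: a majorized vector is reached from `μ` by finitely many transfers between two
entries, and each transfer is realized on the diagonal by rotating two basis vectors, by the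
intermediate value theorem. Let `Λ_c` collect the `c`-th entries of all blocks, so that
`∑_c diag(Λ_c) = diag(μ)`. The block diagonal matrix with blocks `O diag(Λ_c) Oᵀ` has spectrum `λ`
and partial trace `O diag(μ) Oᵀ`. Permuting the copy of `ℂ^{d_B}` attached to each `i` by a
permutation `σ_i` keeps the spectrum and the diagonal of the partial trace. If moreover the `σ_i`
disagree pairwise at every point, which is possible as soon as `d_A ≤ d_B`, then no off-diagonal
entry of a block contributes to the partial trace, which is therefore `diag(λ̃)`.
-/

section Majorization

variable {n : ℕ} {x y : Fin n → ℝ}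

theorem psum_eq_sum_of_le (v : Fin n → ℝ) {r : ℕ} (hr : n ≤ r) : psum v r = ∑ i, v i := by
  rw [psum, Finset.filter_true_of_mem fun i _ => i.isLt.trans_le hr]

/-- Majorization of `x` by `y` with the entries of both taken in the given order. It agrees with
the usual majorization `x ≺ y` when both vectors are nonincreasing; if only `x` is, it still
implies `x ≺ y`. -/
structure PrefixMajorized (x y : Fin n → ℝ) : Prop where
  psum_le : ∀ r, psum x r ≤ psum y r
  sum_eq : ∑ i, x i = ∑ i, y i

/-- The vector `y` after an amount `δ` has moved from entry `j` to entry `k`. -/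
def transfer {ι : Type*} [DecidableEq ι] (y : ι → ℝ) (j k : ι) (δ : ℝ) : ι → ℝ :=
  y - Pi.single j δ + Pi.single k δ

/-- `z` arises from `y` by a Robin Hood transfer (a `T`-transform): an amount moves from an entry
to another one without exceeding their difference. -/
def IsTransfer {ι : Type*} [DecidableEq ι] (y z : ι → ℝ) : Prop :=
  ∃ j k δ, 0 ≤ δ ∧ δ ≤ y j - y k ∧ z = transfer y j k δ

theorem sum_transfer {ι : Type*} [Fintype ι] [DecidableEq ι] (y : ι → ℝ) (j k : ι) (δ : ℝ) :
    ∑ i, transfer y j k δ i = ∑ i, y i := by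
  simp [transfer, Finset.sum_add_distrib, Finset.sum_sub_distrib]

theorem psum_transfer (y : Fin n → ℝ) (j k : Fin n) (δ : ℝ) (r : ℕ) :
    psum (transfer y j k δ) r =
      psum y r - (if (j : ℕ) < r then δ else 0) + (if (k : ℕ) < r then δ else 0) := by
  simp [psum, transfer, Finset.sum_add_distrib, Finset.sum_sub_distrib]

theorem PrefixMajorized.exists_surplus_before_first_deficit (h : PrefixMajorized x y)
    (hxy : x ≠ y) :
    ∃ j k, j < k ∧ x j < y j ∧ y k < x k ∧ ∀ i < k, x i ≤ y i := by
  have hdeficit : {i | y i < x i}.Nonempty := by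
    by_contra! hempty
    have hle : ∀ i, x i ≤ y i := fun i => not_lt.mp (Set.eq_empty_iff_forall_notMem.mp hempty i)
    have heq := (Finset.sum_eq_sum_iff_of_le fun i _ => hle i).mp h.sum_eq
    exact hxy (funext fun i => heq i (Finset.mem_univ i))
  obtain ⟨k, hk, hmin⟩ := wellFounded_lt.has_min _ hdeficit
  have hle : ∀ i < k, x i ≤ y i := fun i hi => not_lt.mp fun hlt => hmin i hlt hi
  by_contra! hnone
  have hge : ∀ i < k, y i ≤ x i := fun i hi => not_lt.mp fun hlt => by
    obtain ⟨i', hi', hlt'⟩ := hnone i k hi hlt hk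
    exact hlt'.not_ge (hle i' hi')
  have hlt : psum y (k + 1) < psum x (k + 1) := by
    refine Finset.sum_lt_sum (fun i hi => ?_) ⟨k, by simp, hk⟩
    have hik : i ≤ k := Nat.lt_succ_iff.mp (Finset.mem_filter.mp hi).2
    exact hik.lt_or_eq.elim (hge i) (fun hik => hik ▸ hk.le)
  exact hlt.not_ge (h.psum_le _)

theorem PrefixMajorized.transfer_right (h : PrefixMajorized x y) {j k : Fin n} {δ : ℝ}
    (hjk : j < k) (hδ : δ ≤ y j - x j) (hle : ∀ i < k, x i ≤ y i) :
    PrefixMajorized x (transfer y j k δ) where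
  psum_le r := by
    by_cases hr : (k : ℕ) < r
    · have hjr : (j : ℕ) < r := lt_trans hjk hr
      simpa [psum_transfer, hr, hjr] using h.psum_le r
    · refine Finset.sum_le_sum fun i hi => ?_
      have hik : i < k := (Finset.mem_filter.mp hi).2.trans_le (not_lt.mp hr)
      rcases eq_or_ne i j with rfl | hij
      · have hi : transfer y i k δ i = y i - δ := by simp [transfer, hik.ne]
        linarith
      · simpa [transfer, hik.ne, hij] using hle i hik
  sum_eq := h.sum_eq.trans (sum_transfer y j k δ).symm

theorem PrefixMajorized.exists_isTransfer_hammingDist_lt (h : PrefixMajorized x y)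
    (hx : Antitone x) (hxy : x ≠ y) :
    ∃ z, IsTransfer y z ∧ PrefixMajorized x z ∧ hammingDist x z < hammingDist x y := by
  obtain ⟨j, k, hjk, hj, hk, hle⟩ := h.exists_surplus_before_first_deficit hxy
  have hxjk : x k ≤ x j := hx hjk.le
  -- The largest transfer that overshoots neither target makes entry `j` or entry `k` correct.
  set δ := min (y j - x j) (x k - y k) with hδ
  have hδj : δ ≤ y j - x j := min_le_left _ _
  have hδ0 : 0 ≤ δ := le_min (by linarith) (by linarith)
  refine ⟨transfer y j k δ, ⟨j, k, δ, hδ0, by linarith, rfl⟩,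
    h.transfer_right hjk hδj hle, Finset.card_lt_card ?_⟩
  have hsub : ∀ i, x i ≠ transfer y j k δ i → x i ≠ y i := by
    intro i hi
    by_cases hij : i = j
    · exact hij ▸ hj.ne
    by_cases hik : i = k
    · exact hik ▸ hk.ne'
    simpa [transfer, hij, hik] using hi
  rw [Finset.ssubset_iff_of_subset (Finset.monotone_filter_right _ fun i _ => hsub i)]
  rcases min_choice (y j - x j) (x k - y k) with hmin | hmin
  · exact ⟨j, by simpa using hj.ne, by simp [transfer, hδ, hmin, hjk.ne]⟩
  · exact ⟨k, by simpa using hk.ne', by simp [transfer, hδ, hmin, hjk.ne']⟩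

theorem PrefixMajorized.reflTransGen_isTransfer {y : Fin n → ℝ} (h : PrefixMajorized x y)
    (hx : Antitone x) :
    Relation.ReflTransGen IsTransfer y x := by
  by_cases hxy : x = y
  · exact hxy ▸ .refl
  obtain ⟨z, hyz, hxz, _⟩ := h.exists_isTransfer_hammingDist_lt hx hxy
  exact .head hyz (hxz.reflTransGen_isTransfer hx)
termination_by hammingDist x y

end Majorization

section Horn

open scoped RealInnerProductSpace

variable {ι E : Type*} [Fintype ι] [NormedAddCommGroup E] [InnerProductSpace ℝ E]

/-- The diagonal of the matrix of `T` in the orthonormal basis `b`. -/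
noncomputable def diagInBasis (T : E →ₗ[ℝ] E) (b : OrthonormalBasis ι ℝ E) (i : ι) : ℝ :=
  ⟪b i, T (b i)⟫

theorem sum_diagInBasis_eq (T : E →ₗ[ℝ] E) (b b' : OrthonormalBasis ι ℝ E) :
    ∑ i, diagInBasis T b i = ∑ i, diagInBasis T b' i :=
  (T.trace_eq_sum_inner b).symm.trans (T.trace_eq_sum_inner b')

theorem exists_inner_map_cos_smul_add_sin_smul_eq (T : E →ₗ[ℝ] E) (u v : E) {a : ℝ}
    (ha : a ∈ Set.uIcc ⟪u, T u⟫ ⟪v, T v⟫) :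
    ∃ θ : ℝ, ⟪Real.cos θ • u + Real.sin θ • v, T (Real.cos θ • u + Real.sin θ • v)⟫ = a := by
  let q : ℝ → ℝ := fun θ =>
    ⟪Real.cos θ • u + Real.sin θ • v, T (Real.cos θ • u + Real.sin θ • v)⟫
  have hq : Continuous q := by
    simp only [q, map_add, map_smul]
    fun_prop
  obtain ⟨θ, -, hθ⟩ := intermediate_value_uIcc (a := 0) (b := Real.pi / 2) hq.continuousOn
    (by simpa [q] using ha)
  exact ⟨θ, hθ⟩

theorem exists_orthonormalBasis_rotate (b : OrthonormalBasis ι ℝ E) {j k : ι}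
    (hjk : j ≠ k) (θ : ℝ) :
    ∃ b' : OrthonormalBasis ι ℝ E, b' j = Real.cos θ • b j + Real.sin θ • b k ∧
      ∀ i, i ≠ j → i ≠ k → b' i = b i := by
  set u := Real.cos θ • b j + Real.sin θ • b k
  have hinner : ∀ i, i ≠ j → i ≠ k → ⟪b j - u, b i⟫ = 0 := fun i hij hik => by
    simp [u, inner_sub_left, inner_add_left, inner_smul_left, b.inner_eq_zero hij.symm,
      b.inner_eq_zero hik.symm]
  have hnorm : ‖b j‖ = ‖u‖ := by
    have hu : ‖u‖ ^ 2 = 1 := by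
      simp [u, norm_add_sq_real, norm_smul, inner_smul_left, inner_smul_right,
        b.inner_eq_zero hjk]
    rw [b.norm_eq_one, (pow_eq_one_iff_of_nonneg (norm_nonneg u) two_ne_zero).mp hu]
  -- The reflection exchanging `b j` and `u` fixes every basis vector orthogonal to both.
  refine ⟨b.map (Submodule.reflection (ℝ ∙ (b j - u))ᗮ), ?_, fun i hij hik => ?_⟩
  · simpa using Submodule.reflection_sub hnorm
  · simpa using Submodule.reflection_mem_subspace_eq_self
      (Submodule.mem_orthogonal_singleton_iff_inner_right.mpr (hinner i hij hik))

theorem exists_diagInBasis_eq_of_isTransfer [DecidableEq ι] (T : E →ₗ[ℝ] E)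
    (b : OrthonormalBasis ι ℝ E) {z : ι → ℝ} (h : IsTransfer (diagInBasis T b) z) :
    ∃ b' : OrthonormalBasis ι ℝ E, diagInBasis T b' = z := by
  obtain ⟨j, k, δ, hδ0, hδ, rfl⟩ := h
  obtain rfl | hjk := eq_or_ne j k
  · exact ⟨b, by simp [transfer]⟩
  obtain ⟨θ, hθ⟩ := exists_inner_map_cos_smul_add_sin_smul_eq T (b j) (b k)
    (a := diagInBasis T b j - δ) (Set.mem_uIcc_of_ge (le_sub_comm.mp hδ) (sub_le_self _ hδ0))
  obtain ⟨b', hj, hother⟩ := exists_orthonormalBasis_rotate b hjk θ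
  have hne : ∀ i, i ≠ k →
      diagInBasis T b' i = transfer (diagInBasis T b) j k δ i := fun i hik => by
    rcases eq_or_ne i j with rfl | hij
    · simpa [diagInBasis, transfer, hj, hik] using hθ
    · simp [diagInBasis, transfer, hother i hij hik, hij, hik]
  -- The rotation only controls entry `j`; invariance of the trace then forces entry `k`.
  have hsum : ∑ i, diagInBasis T b' i =
      ∑ i, transfer (diagInBasis T b) j k δ i := by
    rw [sum_transfer, sum_diagInBasis_eq T b' b]
  refine ⟨b', funext fun i => ?_⟩
  rcases eq_or_ne i k with rfl | hik
  · rw [Fintype.sum_eq_add_sum_compl i, Fintype.sum_eq_add_sum_compl i,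
      Finset.sum_congr rfl fun l hl => hne l (by simpa using hl)] at hsum
    exact add_right_cancel hsum
  · exact hne i hik

theorem exists_diagInBasis_eq_of_reflTransGen [DecidableEq ι] (T : E →ₗ[ℝ] E)
    (b : OrthonormalBasis ι ℝ E) {x : ι → ℝ}
    (h : Relation.ReflTransGen IsTransfer (diagInBasis T b) x) :
    ∃ b' : OrthonormalBasis ι ℝ E, diagInBasis T b' = x := by
  induction h with
  | refl => exact ⟨b, rfl⟩
  | tail _ hyz ih =>
    obtain ⟨b', rfl⟩ := ih
    exact exists_diagInBasis_eq_of_isTransfer T b' hyz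

theorem inner_toEuclideanLin_diagonal [DecidableEq ι] (μ : ι → ℝ) (v : EuclideanSpace ℝ ι) :
    ⟪v, toEuclideanLin (diagonal μ) v⟫ = ∑ i, v i * μ i * v i := by
  simp only [PiLp.inner_apply, ofLp_toLpLin, toLin'_apply, mulVec_diagonal, RCLike.inner_apply,
    conj_trivial]
  exact Finset.sum_congr rfl fun i _ => by ring

theorem exists_orthogonal_diag_conj_diagonal_eq {n : ℕ} {x μ : Fin n → ℝ} (hx : Antitone x)
    (h : PrefixMajorized x μ) :
    ∃ O ∈ orthogonalGroup (Fin n) ℝ, (O * diagonal μ * star O).diag = x := by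
  let T := toEuclideanLin (diagonal μ)
  let e := EuclideanSpace.basisFun (Fin n) ℝ
  have he : diagInBasis T e = μ := by
    ext i
    simp [diagInBasis, T, e, inner_toEuclideanLin_diagonal]
  obtain ⟨b, rfl⟩ := exists_diagInBasis_eq_of_reflTransGen T e (he ▸ h.reflTransGen_isTransfer hx)
  refine ⟨b.toBasis.toMatrix e, b.toMatrix_orthonormalBasis_mem_orthogonal e, ?_⟩
  have hO : ∀ i l, b.toBasis.toMatrix e i l = b i l := fun i l => by
    simp [Module.Basis.toMatrix_apply, b.repr_apply_apply, e, EuclideanSpace.inner_single_right]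
  ext i
  simp [diagInBasis, T, inner_toEuclideanLin_diagonal, mul_apply (M := _ * diagonal μ), hO]

end Horn

section ShearedBlockDiagonal

variable {ι κ R : Type*} [DecidableEq κ]

/-- The block diagonal matrix with blocks `A c`, conjugated by the permutation
`(i, b) ↦ (i, σ i b)` of the index set. -/
def shearedBlockDiagonal [Zero R] (A : κ → Matrix ι ι R) (σ : ι → Equiv.Perm κ) :
    Matrix (ι × κ) (ι × κ) R :=
  (blockDiagonal A).submatrix (Equiv.prodShear (.refl ι) σ) (Equiv.prodShear (.refl ι) σ)

theorem isHermitian_shearedBlockDiagonal [AddMonoid R] [StarAddMonoid R] {A : κ → Matrix ι ι R}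
    (hA : ∀ c, (A c).IsHermitian) (σ : ι → Equiv.Perm κ) :
    (shearedBlockDiagonal A σ).IsHermitian :=
  (isHermitian_blockDiagonal_iff.mpr hA).submatrix _

theorem charpoly_blockDiagonal_s19 [Fintype ι] [DecidableEq ι] [Fintype κ] [CommRing R]
    (A : κ → Matrix ι ι R) : (blockDiagonal A).charpoly = ∏ c, (A c).charpoly := by
  have hcharmatrix : (blockDiagonal A).charmatrix = blockDiagonal fun c => (A c).charmatrix := by
    ext ⟨i, c⟩ ⟨j, d⟩
    by_cases hcd : c = d <;> by_cases hij : i = j <;>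
      simp [blockDiagonal_apply, hcd, hij]
  simp only [charpoly, hcharmatrix, det_blockDiagonal]

theorem charpoly_shearedBlockDiagonal [Fintype ι] [DecidableEq ι] [Fintype κ] [CommRing R]
    (A : κ → Matrix ι ι R) (σ : ι → Equiv.Perm κ) :
    (shearedBlockDiagonal A σ).charpoly = ∏ c, (A c).charpoly := by
  rw [← charpoly_blockDiagonal_s19,
    ← charpoly_reindex (Equiv.prodShear (.refl ι) σ).symm (blockDiagonal A)]
  rfl

theorem partialTraceB_shearedBlockDiagonal {dA dB : ℕ}
    (A : Fin dB → Matrix (Fin dA) (Fin dA) ℂ) {σ : Fin dA → Equiv.Perm (Fin dB)}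
    (hσ : ∀ b, Function.Injective fun i => σ i b) :
    partialTraceB (shearedBlockDiagonal A σ) = diagonal (∑ c, (A c).diag) := by
  ext i i'
  rcases eq_or_ne i i' with rfl | hne
  · simpa [partialTraceB, shearedBlockDiagonal] using Equiv.sum_comp (σ i) fun c => A c i i
  · have hσne : ∀ b, σ i b ≠ σ i' b := fun b h => hne (hσ b h)
    simp [partialTraceB, shearedBlockDiagonal, blockDiagonal_apply, hσne, hne]

end ShearedBlockDiagonal

theorem exists_perm_injective_apply {ι κ : Type*} [Finite κ] (f : ι ↪ κ) :
    ∃ σ : ι → Equiv.Perm κ, ∀ b, Function.Injective fun i => σ i b := by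
  obtain _ | _ := isEmpty_or_nonempty κ
  · exact ⟨1, isEmptyElim⟩
  · let e := Finite.equivFin κ
    let := e.addGroup
    exact ⟨fun i => Equiv.addLeft (f i), fun b i i' h => f.injective (add_right_cancel h)⟩

theorem charpoly_conj_diagonal_of_mem_unitaryGroup {ι R : Type*} [Fintype ι] [DecidableEq ι]
    [CommRing R] [StarRing R] {U : Matrix ι ι R} (hU : U ∈ unitaryGroup ι R) (d : ι → R) :
    (U * diagonal d * star U).charpoly = ∏ i, (X - C (d i)) := by
  rw [charpoly_mul_comm, ← mul_assoc, mem_unitaryGroup_iff'.mp hU, one_mul, charpoly_diagonal]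

section BlockSum

variable {m n : ℕ}

/-- The sums of the `m` consecutive blocks of length `n` of `v`. -/
noncomputable def blockSum (v : Fin (m * n) → ℝ) (k : Fin m) : ℝ :=
  ∑ c : Fin n, v (finProdFinEquiv (k, c))

theorem psum_blockSum (v : Fin (m * n) → ℝ) (r : ℕ) : psum (blockSum v) r = psum v (n * r) := by
  have hlt : ∀ (k : Fin m) (c : Fin n), (finProdFinEquiv (k, c) : ℕ) < n * r ↔ (k : ℕ) < r :=
    fun k c => by
      rw [Nat.mul_comm n r, ← Nat.div_lt_iff_lt_mul c.pos]
      simp [Nat.add_mul_div_left _ _ c.pos, Nat.div_eq_of_lt c.isLt]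
  simp only [psum, Finset.sum_filter, ← Equiv.sum_comp finProdFinEquiv (M := ℝ),
    Fintype.sum_prod_type, hlt, blockSum]
  exact Finset.sum_congr rfl fun k _ => by split_ifs <;> simp

theorem prefixMajorized_blockSum {v : Fin (m * n) → ℝ} {x : Fin m → ℝ}
    (hle : ∀ k : ℕ, 1 ≤ k → k ≤ m - 1 → psum x k ≤ psum v (n * k))
    (heq : psum x m = psum v (m * n)) : PrefixMajorized x (blockSum v) := by
  have hsum : ∑ i, x i = ∑ i, blockSum v i := by
    rw [← psum_eq_sum_of_le x le_rfl, ← psum_eq_sum_of_le (blockSum v) le_rfl, psum_blockSum,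
      heq, psum_eq_sum_of_le v le_rfl, psum_eq_sum_of_le v (mul_comm m n).le]
  refine ⟨fun r => ?_, hsum⟩
  obtain hr | hr := lt_or_ge r m
  · obtain rfl | hr0 := r.eq_zero_or_pos
    · simp [psum]
    · exact (hle r hr0 (Nat.le_sub_one_of_lt hr)).trans_eq (psum_blockSum v r).symm
  · rw [psum_eq_sum_of_le x hr, psum_eq_sum_of_le _ hr, hsum]

end BlockSum

theorem exists_hasSpectrum_partialTraceB_eq_diagonal {dA dB : ℕ} (hle : dA ≤ dB)
    (lam : Fin (dA * dB) → ℝ) {O : Matrix (Fin dA) (Fin dA) ℝ}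
    (hO : O ∈ orthogonalGroup (Fin dA) ℝ) :
    ∃ ρ : Matrix (Fin dA × Fin dB) (Fin dA × Fin dB) ℂ, ρ.IsHermitian ∧ HasSpectrum ρ lam ∧
      partialTraceB ρ =
        diagonal fun i => ((O * diagonal (blockSum lam) * star O).diag i : ℂ) := by
  obtain ⟨σ, hσ⟩ := exists_perm_injective_apply (Fin.castLEEmb hle)
  let Λ : Fin dB → Fin dA → ℝ := fun c k => lam (finProdFinEquiv (k, c))
  let A : Fin dB → Matrix (Fin dA) (Fin dA) ℝ := fun c => O * diagonal (Λ c) * star O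
  have hA : ∀ c, ((A c).map Complex.ofRealHom).IsHermitian := fun c =>
    (isHermitian_mul_mul_conjTranspose O (isHermitian_diagonal (Λ c))).map _
      fun r => (Complex.conj_ofReal r).symm
  have hcharpoly : ∀ c, ((A c).map Complex.ofRealHom).charpoly = ∏ k, (X - C (Λ c k : ℂ)) :=
    fun c => by
      rw [charpoly_map, charpoly_conj_diagonal_of_mem_unitaryGroup hO, Polynomial.map_prod]
      simp
  have hsum : ∑ c, A c = O * diagonal (blockSum lam) * star O := by
    rw [← Finset.sum_mul, ← Finset.mul_sum]
    congr 2
    ext i j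
    simp [Matrix.sum_apply, diagonal_apply, blockSum, Λ]
  refine ⟨shearedBlockDiagonal (fun c => (A c).map Complex.ofRealHom) σ,
    isHermitian_shearedBlockDiagonal hA σ, ?_, ?_⟩
  · rw [HasSpectrum, charpoly_shearedBlockDiagonal, ← Equiv.prod_comp finProdFinEquiv,
      Fintype.prod_prod_type_right]
    exact Finset.prod_congr rfl fun c _ => hcharpoly c
  · rw [partialTraceB_shearedBlockDiagonal _ hσ, ← hsum]
    congr 1
    ext i
    simp [Matrix.sum_apply]

theorem basic_inequalities_sufficient_large_dB_general {dA dB : ℕ} (hle : dA ≤ dB)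
    (lam : Fin (dA * dB) → ℝ) (tlam : Fin dA → ℝ) (htlam : Antitone tlam)
    (hbasic : ∀ k : ℕ, 1 ≤ k → k ≤ dA - 1 → psum tlam k ≤ psum lam (dB * k))
    (htrace : psum tlam dA = psum lam (dA * dB)) :
    ∃ ρAB : Matrix (Fin dA × Fin dB) (Fin dA × Fin dB) ℂ,
      ρAB.IsHermitian ∧ HasSpectrum ρAB lam ∧ HasSpectrum (partialTraceB ρAB) tlam := by
  obtain ⟨O, hO, hdiag⟩ := exists_orthogonal_diag_conj_diagonal_eq htlam
    (prefixMajorized_blockSum hbasic htrace)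
  obtain ⟨ρ, hherm, hspec, htr⟩ := exists_hasSpectrum_partialTraceB_eq_diagonal hle lam hO
  refine ⟨ρ, hherm, hspec, ?_⟩
  rw [HasSpectrum, htr, hdiag, charpoly_diagonal]

/-- In the large message limit `d_B ≥ d_A²/2`, the basic inequalities (with the trace
condition) are sufficient: any nonincreasing `λ, λ̃` satisfying them are the spectra of
some Hermitian `ρ_{AB}` and its partial trace `ρ_A`. -/
theorem basic_inequalities_sufficient_large_dB {dA dB : ℕ}
    (hdA : 0 < dA) (hdB : 0 < dB) (hbig : dA ^ 2 ≤ 2 * dB)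
    (lam : Fin (dA * dB) → ℝ) (hlam : Antitone lam)
    (tlam : Fin dA → ℝ) (htlam : Antitone tlam)
    (hbasic : ∀ k : ℕ, 1 ≤ k → k ≤ dA - 1 → psum tlam k ≤ psum lam (dB * k))
    (htrace : psum tlam dA = psum lam (dA * dB)) :
    ∃ ρAB : Matrix (Fin dA × Fin dB) (Fin dA × Fin dB) ℂ,
      ρAB.IsHermitian ∧ HasSpectrum ρAB lam ∧ HasSpectrum (partialTraceB ρAB) tlam :=
  basic_inequalities_sufficient_large_dB_general (by nlinarith) lam tlam htlam hbasic htrace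
end
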